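/- HyperCTL* satisfiability is Σ²₁-complete: under a fixed computable injective encoding of HyperCTL* sentences as natural numbers, the set of codes of satisfiable HyperCTL* sentences is Σ²₁, and every Σ²₁ set many-one reduces to it via a total computable function. -/

import Mathlib

/-! ### Transition systems and HyperCTL* -/

/-- A transition system over `AP`: every vertex has an outgoing edge. -/
structure TS (AP : Type) : Type 1 where
  V : Type
  E : V → V → Prop
  vI : V
  lab : V → Set AP
  succ : ∀ v, ∃ w, E v w

/-- A path through a transition system. -/
def TS.IsPath {AP : Type} (S : TS AP) (ρ : ℕ → S.V) : Prop :=
  ∀ i, S.E (ρ i) (ρ (i + 1))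

/-- HyperCTL* formulas; path variables are natural numbers. -/
inductive CTL (AP : Type) : Type where
  | atom : AP → ℕ → CTL AP
  | neg  : CTL AP → CTL AP
  | disj : CTL AP → CTL AP → CTL AP
  | next : CTL AP → CTL AP
  | untl : CTL AP → CTL AP → CTL AP
  | ex   : ℕ → CTL AP → CTL AP
  | all  : ℕ → CTL AP → CTL AP

/-- Semantics of HyperCTL* w.r.t. a path assignment `As` and the variable `r`
most recently added to the assignment: quantified paths start at the first
vertex of the most recently assigned path. -/
def CTL.sat {AP : Type} (S : TS AP) : CTL AP → (ℕ → ℕ → S.V) → ℕ → Prop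
  | .atom a x, As, _ => a ∈ S.lab (As x 0)
  | .neg φ, As, r => ¬ φ.sat S As r
  | .disj φ ψ, As, r => φ.sat S As r ∨ ψ.sat S As r
  | .next φ, As, r => φ.sat S (fun x i => As x (i + 1)) r
  | .untl φ ψ, As, r =>
      ∃ j, ψ.sat S (fun x i => As x (i + j)) r ∧
        ∀ j' < j, φ.sat S (fun x i => As x (i + j')) r
  | .ex x φ, As, r => ∃ ρ : ℕ → S.V, S.IsPath ρ ∧ ρ 0 = As r 0 ∧
      φ.sat S (Function.update As x ρ) x
  | .all x φ, As, r => ∀ ρ : ℕ → S.V, S.IsPath ρ → ρ 0 = As r 0 →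
      φ.sat S (Function.update As x ρ) x

def CTL.freeVars {AP : Type} : CTL AP → Set ℕ
  | .atom _ x => {x}
  | .neg φ => φ.freeVars
  | .disj φ ψ => φ.freeVars ∪ ψ.freeVars
  | .next φ => φ.freeVars
  | .untl φ ψ => φ.freeVars ∪ ψ.freeVars
  | .ex x φ => φ.freeVars \ {x}
  | .all x φ => φ.freeVars \ {x}

/-- Every temporal operator occurs in the scope of a path quantifier. -/
def CTL.guarded {AP : Type} : CTL AP → Prop
  | .atom _ _ => True
  | .neg φ => φ.guarded
  | .disj φ ψ => φ.guarded ∧ ψ.guarded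
  | .next _ => False
  | .untl _ _ => False
  | .ex _ _ => True
  | .all _ _ => True

/-- A HyperCTL* sentence: no free variables and all temporal operators occur
under a path quantifier. -/
def CTL.IsSentence {AP : Type} (φ : CTL AP) : Prop := φ.freeVars = ∅ ∧ φ.guarded

/-- `S ⊨ φ`: satisfaction w.r.t. the empty assignment, i.e. quantification of
the first path starts at the initial vertex (for sentences the choice of the
initial dummy path is irrelevant). -/
def CModels {AP : Type} (S : TS AP) (φ : CTL AP) : Prop :=
  ∀ ρ : ℕ → S.V, S.IsPath ρ → ρ 0 = S.vI → φ.sat S (fun _ => ρ) 0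

/-- A fixed computable injective encoding of HyperCTL* formulas. -/
def CTL.code : CTL ℕ → ℕ
  | .atom a x => Nat.pair 0 (Nat.pair a x)
  | .neg φ => Nat.pair 1 φ.code
  | .disj φ ψ => Nat.pair 2 (Nat.pair φ.code ψ.code)
  | .next φ => Nat.pair 3 φ.code
  | .untl φ ψ => Nat.pair 4 (Nat.pair φ.code ψ.code)
  | .ex x φ => Nat.pair 5 (Nat.pair x φ.code)
  | .all x φ => Nat.pair 6 (Nat.pair x φ.code)

/-- `A` many-one reduces to `B` via a total computable function. -/
def ManyOneRed (A B : Set ℕ) : Prop :=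
  ∃ f : ℕ → ℕ, Computable f ∧ ∀ x, x ∈ A ↔ f x ∈ B

/-! ### Σ²₁ sets -/

/-- Terms of arithmetic with number variables, applications of type-1 function
variables, and applications of type-2 variables to type-1 variables. -/
inductive T2Term : Type where
  | var : ℕ → T2Term
  | zero : T2Term
  | one : T2Term
  | add : T2Term → T2Term → T2Term
  | mul : T2Term → T2Term → T2Term
  | app1 : ℕ → T2Term → T2Term
  | app2 : ℕ → ℕ → T2Term

def T2Term.eval : T2Term → (ℕ → ℕ) → (ℕ → ℕ → ℕ) → (ℕ → (ℕ → ℕ) → ℕ) → ℕ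
  | .var x, v, _, _ => v x
  | .zero, _, _, _ => 0
  | .one, _, _, _ => 1
  | .add s t, v, g, G => s.eval v g G + t.eval v g G
  | .mul s t, v, g, G => s.eval v g G * t.eval v g G
  | .app1 f t, v, g, G => g f (t.eval v g G)
  | .app2 F f, v, g, _G => _G F (g f)

/-- Arithmetic formulas with arbitrary quantification over type-0 objects
(naturals) and type-1 objects (functions ℕ → ℕ); type-2 variables occur free. -/
inductive T2Form : Type where
  | eq : T2Term → T2Term → T2Form
  | lt : T2Term → T2Term → T2Form
  | neg : T2Form → T2Form
  | disj : T2Form → T2Form → T2Form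
  | exN : ℕ → T2Form → T2Form
  | allN : ℕ → T2Form → T2Form
  | exF : ℕ → T2Form → T2Form
  | allF : ℕ → T2Form → T2Form

def T2Form.sat : T2Form → (ℕ → ℕ) → (ℕ → ℕ → ℕ) → (ℕ → (ℕ → ℕ) → ℕ) → Prop
  | .eq s t, v, g, G => s.eval v g G = t.eval v g G
  | .lt s t, v, g, G => s.eval v g G < t.eval v g G
  | .neg φ, v, g, G => ¬ φ.sat v g G
  | .disj φ ψ, v, g, G => φ.sat v g G ∨ ψ.sat v g G
  | .exN x φ, v, g, G => ∃ n : ℕ, φ.sat (Function.update v x n) g G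
  | .allN x φ, v, g, G => ∀ n : ℕ, φ.sat (Function.update v x n) g G
  | .exF x φ, v, g, G => ∃ h : ℕ → ℕ, φ.sat v (Function.update g x h) G
  | .allF x φ, v, g, G => ∀ h : ℕ → ℕ, φ.sat v (Function.update g x h) G

/-- A set `N ⊆ ℕ` is Σ²₁ if it is defined by existential quantification over
type-2 objects followed by an arithmetic formula with arbitrary quantification
over type-0 and type-1 objects. -/
def Sigma21 (N : Set ℕ) : Prop :=
  ∃ ψ : T2Form, ∀ x : ℕ, x ∈ N ↔
    ∃ G : ℕ → (ℕ → ℕ) → ℕ, ψ.sat (fun _ => x) (fun _ _ => 0) G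

/-- The set of codes of satisfiable HyperCTL* sentences. -/
def CTLSatCodes : Set ℕ :=
  {n : ℕ | ∃ φ : CTL ℕ, φ.IsSentence ∧ φ.code = n ∧ ∃ S : TS ℕ, CModels S φ}

namespace HC

/-! ### A polynomial pairing function -/

def q (a b : ℕ) : ℕ := (a + b) * (a + b) + a

lemma q_inj {a b c d : ℕ} (h : q a b = q c d) : a = c ∧ b = d := by
  unfold q at h
  have h1 : a + b = c + d := by
    rcases lt_trichotomy (a + b) (c + d) with h2 | h2 | h2
    · nlinarith
    · exact h2
    · nlinarith
  rw [h1] at h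
  omega

lemma q_iff {a b c d : ℕ} : q a b = q c d ↔ a = c ∧ b = d :=
  ⟨q_inj, fun h => by rw [h.1, h.2]⟩

lemma exists_q2 (F : ℕ → ℕ → ℕ) : ∃ p : ℕ → ℕ, ∀ i k, p (q i k) = F i k := by
  classical
  refine ⟨fun m => if h : ∃ z : ℕ × ℕ, q z.1 z.2 = m then F h.choose.1 h.choose.2 else 0, ?_⟩
  intro i k
  have h : ∃ z : ℕ × ℕ, q z.1 z.2 = q i k := ⟨(i, k), rfl⟩
  have h2 := q_inj h.choose_spec
  simp only [dif_pos h]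
  rw [h2.1, h2.2]

lemma exists_q3 (F : ℕ → ℕ → ℕ → ℕ) :
    ∃ p : ℕ → ℕ, ∀ x i k, p (q x (q i k)) = F x i k := by
  choose P hP using fun x => exists_q2 (F x)
  obtain ⟨p, hp⟩ := exists_q2 P
  exact ⟨p, fun x i k => by rw [hp, hP]⟩

/-! ### The coding of formulas is injective -/

lemma code_inj : ∀ φ ψ : CTL ℕ, φ.code = ψ.code → φ = ψ := by
  intro φ
  induction φ with
  | atom a x => intro ψ h; cases ψ <;> simp_all [CTL.code, Nat.pair_eq_pair]
  | neg φ ih =>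
    intro ψ h; cases ψ <;> simp [CTL.code, Nat.pair_eq_pair] at h
    rw [ih _ h]
  | disj φ ψ ih1 ih2 =>
    intro ψ h; cases ψ <;> simp [CTL.code, Nat.pair_eq_pair] at h
    rw [ih1 _ h.1, ih2 _ h.2]
  | next φ ih =>
    intro ψ h; cases ψ <;> simp [CTL.code, Nat.pair_eq_pair] at h
    rw [ih _ h]
  | untl φ ψ ih1 ih2 =>
    intro ψ h; cases ψ <;> simp [CTL.code, Nat.pair_eq_pair] at h
    rw [ih1 _ h.1, ih2 _ h.2]
  | ex x φ ih =>
    intro ψ h; cases ψ <;> simp [CTL.code, Nat.pair_eq_pair] at h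
    rw [h.1, ih _ h.2]
  | all x φ ih =>
    intro ψ h; cases ψ <;> simp [CTL.code, Nat.pair_eq_pair] at h
    rw [h.1, ih _ h.2]

instance : Countable (CTL ℕ) := ⟨⟨CTL.code, fun a b h => code_inj a b h⟩⟩

/-! ### Downward Löwenheim–Skolem -/

/-- Well-founded countably branching trees naming the vertices of the Skolem hull. -/
inductive Tr : Type where
  | init : Tr
  | node : ℕ → (ℕ → Tr) → Tr

def Tr.enc : Tr → List ℕ → ℕ
  | .init, _ => 0
  | .node c _, [] => c + 1
  | .node _ ch, a :: l => (ch a).enc l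

lemma Tr.enc_inj : ∀ s t : Tr, s.enc = t.enc → s = t := by
  intro s
  induction s with
  | init =>
    intro t h
    cases t with
    | init => rfl
    | node c ch => have := congrFun h []; simp [Tr.enc] at this
  | node c ch ih =>
    intro t h
    cases t with
    | init => have := congrFun h []; simp [Tr.enc] at this
    | node c' ch' =>
      have h0 := congrFun h []
      simp [Tr.enc] at h0
      subst h0
      congr 1
      funext a
      apply ih
      funext l
      exact congrFun h (a :: l)

lemma exists_surj_Tr : ∃ p : (ℕ → ℕ) → Tr, Function.Surjective p := by
  let e : (List ℕ → ℕ) ≃ (ℕ → ℕ) := Equiv.arrowCongr (Denumerable.eqv (List ℕ)) (Equiv.refl ℕ)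
  have : Nonempty Tr := ⟨.init⟩
  refine ⟨Function.invFun (fun t : Tr => e t.enc), Function.invFun_surjective ?_⟩
  intro s t h
  exact Tr.enc_inj s t (e.injective h)

open Classical in
noncomputable def sk (S : TS ℕ) (φ : CTL ℕ) (x r : ℕ) (As : ℕ → ℕ → S.V) : ℕ → S.V :=
  if h : ∃ ρ : ℕ → S.V, S.IsPath ρ ∧ ρ 0 = As r 0 ∧ φ.sat S (Function.update As x ρ) x
  then h.choose else fun _ => S.vI

lemma sk_spec (S : TS ℕ) (φ : CTL ℕ) (x r : ℕ) (As : ℕ → ℕ → S.V)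
    (h : ∃ ρ : ℕ → S.V, S.IsPath ρ ∧ ρ 0 = As r 0 ∧ φ.sat S (Function.update As x ρ) x) :
    S.IsPath (sk S φ x r As) ∧ sk S φ x r As 0 = As r 0 ∧
      φ.sat S (Function.update As x (sk S φ x r As)) x := by
  unfold sk
  rw [dif_pos h]
  exact h.choose_spec

noncomputable def Tr.val (S : TS ℕ) (e : ℕ → CTL ℕ × ℕ × ℕ × ℕ) : Tr → S.V
  | .init => S.vI
  | .node c ch => sk S (e c).1 (e c).2.1 (e c).2.2.1
      (fun x i => (ch (Nat.pair x i)).val S e) (e c).2.2.2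

lemma exists_hull (S : TS ℕ) : ∃ p : (ℕ → ℕ) → S.V, S.vI ∈ Set.range p ∧
    ∀ φ x r (As : ℕ → ℕ → ℕ → ℕ) k, sk S φ x r (fun x i => p (As x i)) k ∈ Set.range p := by
  have : Nonempty (CTL ℕ) := ⟨.atom 0 0⟩
  obtain ⟨e, he⟩ := exists_surjective_nat (CTL ℕ × ℕ × ℕ × ℕ)
  obtain ⟨s, hs⟩ := exists_surj_Tr
  refine ⟨fun f => (s f).val S e, ?_, ?_⟩
  · obtain ⟨f, hf⟩ := hs .init
    exact ⟨f, by simp [hf, Tr.val]⟩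
  · intro φ x r As k
    obtain ⟨c, hc⟩ := he (φ, x, r, k)
    obtain ⟨f, hf⟩ := hs (.node c (fun n => s (As n.unpair.1 n.unpair.2)))
    exact ⟨f, by simp [hf, Tr.val, hc]⟩

lemma exists_path (S : TS ℕ) (v : S.V) : ∃ ρ : ℕ → S.V, S.IsPath ρ ∧ ρ 0 = v := by
  choose f hf using S.succ
  refine ⟨fun n => Nat.rec v (fun _ w => f w) n, fun i => hf _, rfl⟩

lemma upd_comp {α β : Type} (p : α → β) (As : ℕ → ℕ → α) (x : ℕ) (ρ : ℕ → α) :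
    (fun y i => p (Function.update As x ρ y i)) =
      Function.update (fun y i => p (As y i)) x (fun i => p (ρ i)) := by
  funext y i
  by_cases h : y = x
  · subst h; simp
  · simp [Function.update_of_ne h]

lemma hull_sat (S S' : TS ℕ) (p : S'.V → S.V) (hE : ∀ v w, S'.E v w ↔ S.E (p v) (p w))
    (hL : ∀ v, S'.lab v = S.lab (p v))
    (hp : ∀ φ x r (As : ℕ → ℕ → S'.V) k,
      sk S φ x r (fun x i => p (As x i)) k ∈ Set.range p) :
    ∀ (φ : CTL ℕ) (As : ℕ → ℕ → S'.V) (r : ℕ),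
      φ.sat S' As r ↔ φ.sat S (fun x i => p (As x i)) r := by
  have key : ∀ (φ : CTL ℕ) (x r : ℕ) (As : ℕ → ℕ → S'.V),
      (∀ (As : ℕ → ℕ → S'.V) (r : ℕ),
        φ.sat S' As r ↔ φ.sat S (fun x i => p (As x i)) r) →
      ((CTL.ex x φ).sat S' As r ↔
        (CTL.ex x φ).sat S (fun x i => p (As x i)) r) := by
    intro φ x r As ih
    constructor
    · rintro ⟨ρ, h1, h2, h3⟩
      refine ⟨fun i => p (ρ i), fun i => (hE _ _).1 (h1 i), by simp [h2], ?_⟩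
      rw [← upd_comp]
      exact (ih _ _).1 h3
    · intro h
      obtain ⟨h1, h2, h3⟩ := sk_spec S φ x r (fun x i => p (As x i)) h
      have hr := hp φ x r As
      choose ρ hρ using hr
      let ρ' : ℕ → S'.V := fun i => if i = 0 then As r 0 else ρ i
      have hρ' : (fun i => p (ρ' i)) = sk S φ x r (fun x i => p (As x i)) := by
        funext i
        by_cases hi : i = 0
        · subst hi; simp [ρ', h2]
        · simp [ρ', hi, hρ]
      refine ⟨ρ', ?_, by simp [ρ'], ?_⟩
      · intro i
        have := h1 i
        rw [← hρ'] at this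
        exact (hE _ _).2 this
      · refine (ih _ _).2 ?_
        rw [← hρ', ← upd_comp] at h3
        exact h3
  have allex : ∀ (S : TS ℕ) (x : ℕ) (φ : CTL ℕ) (As : ℕ → ℕ → S.V) (r : ℕ),
      (CTL.all x φ).sat S As r ↔ ¬ (CTL.ex x φ.neg).sat S As r := by
    intro S x φ As r
    simp [CTL.sat]
  intro φ
  induction φ with
  | atom a x => intro As r; simp only [CTL.sat, hL]
  | neg φ ih => intro As r; simp only [CTL.sat, ih]
  | disj φ ψ ih1 ih2 => intro As r; simp only [CTL.sat, ih1, ih2]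
  | next φ ih => intro As r; exact ih _ _
  | untl φ ψ ih1 ih2 => intro As r; simp only [CTL.sat, ih1, ih2]
  | ex x φ ih => intro As r; exact key φ x r As ih
  | all x φ ih =>
    intro As r
    rw [allex, allex, key φ.neg x r As (fun As r => by simp only [CTL.sat, ih])]

/-- Every transition system has an equivalent one whose vertices are functions `ℕ → ℕ`. -/
lemma small_model (S : TS ℕ) : ∃ S' : TS ℕ, Nonempty ((ℕ → ℕ) ≃ S'.V) ∧
    ∀ φ : CTL ℕ, CModels S φ → CModels S' φ := by
  obtain ⟨p, ⟨v0, h0⟩, hp⟩ := exists_hull S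
  have hs : ∀ v, ∃ w, S.E (p v) (p w) := by
    intro v
    obtain ⟨ρ, h1, h2⟩ := exists_path S (p v)
    obtain ⟨h1, h2, -⟩ := sk_spec S (.disj (.atom 0 0) (.neg (.atom 0 0))) 0 0
      (fun _ _ => p v) ⟨ρ, h1, h2, by simp [CTL.sat, em]⟩
    obtain ⟨w, hw⟩ := hp (.disj (.atom 0 0) (.neg (.atom 0 0))) 0 0 (fun _ _ => v) 1
    have h3 := h1 0
    rw [h2] at h3
    exact ⟨w, by rw [hw]; exact h3⟩
  refine ⟨⟨ℕ → ℕ, fun v w => S.E (p v) (p w), v0, fun v => S.lab (p v), hs⟩,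
    ⟨Equiv.refl _⟩, fun φ h ρ h1 h2 => ?_⟩
  refine (hull_sat S _ p (fun _ _ => Iff.rfl) (fun _ => rfl) hp φ _ _).2 ?_
  exact h _ h1 (by rw [← h0, h2])

end HC
namespace HC

/-! ### Membership of `CTLSatCodes` in Σ²₁: the semantic part -/

def shiftR (A : ℕ → ℕ) (j : ℕ) (B : ℕ → ℕ) : Prop :=
  ∀ x i k, B (q x (q i k)) = A (q x (q (i + j) k))

def updR (A : ℕ → ℕ) (x : ℕ) (p B : ℕ → ℕ) : Prop :=
  (∀ y, y ≠ x → ∀ i k, B (q y (q i k)) = A (q y (q i k))) ∧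
    ∀ i k, B (q x (q i k)) = p (q i k)

def pathR (Ep : (ℕ → ℕ) → (ℕ → ℕ) → Prop) (p : ℕ → ℕ) : Prop :=
  ∀ i, Ep (fun k => p (q i k)) (fun k => p (q (i + 1) k))

def startR (A : ℕ → ℕ) (r : ℕ) (p : ℕ → ℕ) : Prop :=
  ∀ k, p (q 0 k) = A (q r (q 0 k))

section
variable (Sp : ℕ → ℕ → (ℕ → ℕ) → Prop) (Ep : (ℕ → ℕ) → (ℕ → ℕ) → Prop)
  (Lp : ℕ → (ℕ → ℕ) → Prop) (u w t : ℕ → ℕ)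

def clAtom (c : ℕ) : Prop :=
  ∃ a x, Nat.pair 0 (Nat.pair a x) = c ∧
    (∀ A r, Sp c r A ↔ Lp a (fun k => A (q x (q 0 k)))) ∧ w (q c x) ≠ 0

def clNeg (c : ℕ) : Prop :=
  ∃ d, Nat.pair 1 d = c ∧ u d ≠ 0 ∧ (∀ A r, Sp c r A ↔ ¬ Sp d r A) ∧
    (∀ y, w (q d y) ≠ 0 → w (q c y) ≠ 0) ∧ (t c ≠ 0 → t d ≠ 0)

def clDisj (c : ℕ) : Prop :=
  ∃ d e, Nat.pair 2 (Nat.pair d e) = c ∧ u d ≠ 0 ∧ u e ≠ 0 ∧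
    (∀ A r, Sp c r A ↔ Sp d r A ∨ Sp e r A) ∧
    (∀ y, w (q d y) ≠ 0 ∨ w (q e y) ≠ 0 → w (q c y) ≠ 0) ∧
    (t c ≠ 0 → t d ≠ 0 ∧ t e ≠ 0)

def clNext (c : ℕ) : Prop :=
  ∃ d, Nat.pair 3 d = c ∧ u d ≠ 0 ∧
    (∀ A r, Sp c r A ↔ ∃ B, shiftR A 1 B ∧ Sp d r B) ∧
    (∀ y, w (q d y) ≠ 0 → w (q c y) ≠ 0) ∧ t c = 0

def clUntl (c : ℕ) : Prop :=
  ∃ d e, Nat.pair 4 (Nat.pair d e) = c ∧ u d ≠ 0 ∧ u e ≠ 0 ∧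
    (∀ A r, Sp c r A ↔ ∃ j, (∃ B, shiftR A j B ∧ Sp e r B) ∧
      ∀ j', j' < j → ∃ B, shiftR A j' B ∧ Sp d r B) ∧
    (∀ y, w (q d y) ≠ 0 ∨ w (q e y) ≠ 0 → w (q c y) ≠ 0) ∧ t c = 0

def clEx (c : ℕ) : Prop :=
  ∃ x d, Nat.pair 5 (Nat.pair x d) = c ∧ u d ≠ 0 ∧
    (∀ A r, Sp c r A ↔ ∃ p, pathR Ep p ∧ startR A r p ∧ ∃ B, updR A x p B ∧ Sp d x B) ∧
    (∀ y, w (q d y) ≠ 0 ∧ y ≠ x → w (q c y) ≠ 0)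

def clAll (c : ℕ) : Prop :=
  ∃ x d, Nat.pair 6 (Nat.pair x d) = c ∧ u d ≠ 0 ∧
    (∀ A r, Sp c r A ↔ ∀ p, pathR Ep p → startR A r p → ∃ B, updR A x p B ∧ Sp d x B) ∧
    (∀ y, w (q d y) ≠ 0 ∧ y ≠ x → w (q c y) ≠ 0)

def Clause (c : ℕ) : Prop :=
  clAtom Sp Lp w c ∨ clNeg Sp u w t c ∨ clDisj Sp u w t c ∨ clNext Sp u w t c ∨
    clUntl Sp u w t c ∨ clEx Sp Ep u w c ∨ clAll Sp Ep u w c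

def UpSpec (v0 : ℕ → ℕ) (n : ℕ) : Prop :=
  (∀ v : ℕ → ℕ, ∃ p : ℕ → ℕ, (∀ k, p (q 0 k) = v k) ∧
      Ep (fun k => p (q 0 k)) (fun k => p (q (0 + 1) k))) ∧
  (∀ c, u c ≠ 0 → Clause Sp Ep Lp u w t c) ∧ u n ≠ 0 ∧ t n ≠ 0 ∧ (∀ y, w (q n y) = 0) ∧
  ∀ p, pathR Ep p → (∀ k, p (q 0 k) = v0 k) → ∀ B, (∀ x i k, B (q x (q i k)) = p (q i k)) →
    Sp n 0 B
end

def dec {V : Type} (e : (ℕ → ℕ) ≃ V) (A : ℕ → ℕ) : ℕ → ℕ → V :=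
  fun x i => e (fun k => A (q x (q i k)))

def decP {V : Type} (e : (ℕ → ℕ) ≃ V) (p : ℕ → ℕ) : ℕ → V := fun i => e (fun k => p (q i k))

lemma dec_surj {V : Type} (e : (ℕ → ℕ) ≃ V) (As : ℕ → ℕ → V) : ∃ A, dec e A = As := by
  obtain ⟨A, hA⟩ := exists_q3 (fun x i k => e.symm (As x i) k)
  refine ⟨A, ?_⟩
  funext x i
  simp [dec, hA]

lemma decP_surj {V : Type} (e : (ℕ → ℕ) ≃ V) (ρ : ℕ → V) : ∃ p, decP e p = ρ := by
  obtain ⟨A, hA⟩ := exists_q2 (fun i k => e.symm (ρ i) k)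
  refine ⟨A, ?_⟩
  funext i
  simp [decP, hA]

lemma dec_shift {V : Type} (e : (ℕ → ℕ) ≃ V) (A B : ℕ → ℕ) (j : ℕ) :
    shiftR A j B ↔ dec e B = fun x i => dec e A x (i + j) := by
  simp [shiftR, funext_iff, dec, e.injective.eq_iff]

lemma dec_upd {V : Type} (e : (ℕ → ℕ) ≃ V) (A B p : ℕ → ℕ) (x : ℕ) :
    updR A x p B ↔ dec e B = Function.update (dec e A) x (decP e p) := by
  constructor
  · rintro ⟨h1, h2⟩
    funext y i
    by_cases h : y = x
    · subst h; simp [dec, decP, h2]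
    · simp [dec, Function.update_of_ne h, h1 y h]
  · intro h
    refine ⟨fun y hy i k => ?_, fun i k => ?_⟩
    · have := congrFun (congrFun h y) i
      rw [Function.update_of_ne hy] at this
      exact congrFun (e.injective this) k
    · have := congrFun (congrFun h x) i
      rw [Function.update_self] at this
      exact congrFun (e.injective this) k

section
variable (S : TS ℕ) (e : (ℕ → ℕ) ≃ S.V)

lemma dec_path (Ep : (ℕ → ℕ) → (ℕ → ℕ) → Prop) (hE : ∀ v w, Ep v w ↔ S.E (e v) (e w))
    (p : ℕ → ℕ) : pathR Ep p ↔ S.IsPath (decP e p) := by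
  simp [pathR, TS.IsPath, decP, hE]

lemma dec_start (A p : ℕ → ℕ) (r : ℕ) : startR A r p ↔ decP e p 0 = dec e A r 0 := by
  simp [startR, decP, dec, funext_iff]

lemma sat_next (φ : CTL ℕ) (A : ℕ → ℕ) (r : ℕ) :
    (CTL.next φ).sat S (dec e A) r ↔ ∃ B, shiftR A 1 B ∧ φ.sat S (dec e B) r := by
  simp only [dec_shift e, CTL.sat]
  constructor
  · intro h
    obtain ⟨B, hB⟩ := dec_surj e (fun x i => dec e A x (i + 1))
    exact ⟨B, hB, by rw [hB]; exact h⟩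
  · rintro ⟨B, hB, h⟩
    rw [hB] at h
    exact h

lemma sat_untl (φ ψ : CTL ℕ) (A : ℕ → ℕ) (r : ℕ) :
    (CTL.untl φ ψ).sat S (dec e A) r ↔ ∃ j, (∃ B, shiftR A j B ∧ ψ.sat S (dec e B) r) ∧
      ∀ j', j' < j → ∃ B, shiftR A j' B ∧ φ.sat S (dec e B) r := by
  have key : ∀ (φ : CTL ℕ) j, (∃ B, shiftR A j B ∧ φ.sat S (dec e B) r) ↔
      φ.sat S (fun x i => dec e A x (i + j)) r := by
    intro φ j
    simp only [dec_shift e]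
    constructor
    · rintro ⟨B, hB, h⟩
      rw [hB] at h
      exact h
    · intro h
      obtain ⟨B, hB⟩ := dec_surj e (fun x i => dec e A x (i + j))
      exact ⟨B, hB, by rw [hB]; exact h⟩
  simp only [key, CTL.sat]

lemma sat_ex (Ep : (ℕ → ℕ) → (ℕ → ℕ) → Prop)
    (hE : ∀ v w, Ep v w ↔ S.E (e v) (e w)) (φ : CTL ℕ) (A : ℕ → ℕ) (x r : ℕ) :
    (CTL.ex x φ).sat S (dec e A) r ↔
      ∃ p, pathR Ep p ∧ startR A r p ∧ ∃ B, updR A x p B ∧ φ.sat S (dec e B) x := by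
  simp only [dec_path S e Ep hE, dec_start S e, dec_upd e, CTL.sat]
  constructor
  · rintro ⟨ρ, h1, h2, h3⟩
    obtain ⟨p, rfl⟩ := decP_surj e ρ
    obtain ⟨B, hB⟩ := dec_surj e (Function.update (dec e A) x (decP e p))
    exact ⟨p, h1, h2, B, hB, by rw [hB]; exact h3⟩
  · rintro ⟨p, h1, h2, B, hB, h⟩
    exact ⟨decP e p, h1, h2, by rw [← hB]; exact h⟩

lemma sat_all (Ep : (ℕ → ℕ) → (ℕ → ℕ) → Prop)
    (hE : ∀ v w, Ep v w ↔ S.E (e v) (e w)) (φ : CTL ℕ) (A : ℕ → ℕ) (x r : ℕ) :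
    (CTL.all x φ).sat S (dec e A) r ↔
      ∀ p, pathR Ep p → startR A r p → ∃ B, updR A x p B ∧ φ.sat S (dec e B) x := by
  simp only [dec_path S e Ep hE, dec_start S e, dec_upd e, CTL.sat]
  constructor
  · intro h p h1 h2
    obtain ⟨B, hB⟩ := dec_surj e (Function.update (dec e A) x (decP e p))
    exact ⟨B, hB, by rw [hB]; exact h _ h1 h2⟩
  · intro h ρ h1 h2
    obtain ⟨p, rfl⟩ := decP_surj e ρ
    obtain ⟨B, hB, h⟩ := h p h1 h2
    rw [← hB]; exact h

end

lemma lt_pair_of_pos {a b : ℕ} (h : 0 < a) : b < Nat.pair a b := by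
  unfold Nat.pair
  split <;> nlinarith

lemma upSpec_of_mem {n : ℕ} (h : n ∈ CTLSatCodes) :
    ∃ Sp Ep Lp u w t v0, UpSpec Sp Ep Lp u w t v0 n := by
  classical
  obtain ⟨φ, ⟨hf, hg⟩, rfl, S0, hS0⟩ := h
  obtain ⟨S, ⟨e⟩, hS⟩ := small_model S0
  have hM := hS φ hS0
  have hc : ∀ φ ψ : CTL ℕ, φ.code = ψ.code ↔ φ = ψ := fun φ ψ =>
    ⟨code_inj φ ψ, fun h => by rw [h]⟩
  let Sp : ℕ → ℕ → (ℕ → ℕ) → Prop := fun c r A => ∃ φ : CTL ℕ, φ.code = c ∧ φ.sat S (dec e A) r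
  let Ep : (ℕ → ℕ) → (ℕ → ℕ) → Prop := fun v w => S.E (e v) (e w)
  let Lp : ℕ → (ℕ → ℕ) → Prop := fun a v => a ∈ S.lab (e v)
  let u : ℕ → ℕ := fun c => if ∃ φ : CTL ℕ, φ.code = c then 1 else 0
  let t : ℕ → ℕ := fun c => if ∃ φ : CTL ℕ, φ.code = c ∧ φ.guarded then 1 else 0
  let w : ℕ → ℕ := fun m => if ∃ (φ : CTL ℕ) (y : ℕ), q φ.code y = m ∧ y ∈ φ.freeVars then 1 else 0
  have hSp : ∀ (φ : CTL ℕ) r A, Sp φ.code r A ↔ φ.sat S (dec e A) r := by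
    intro φ r A
    simp [Sp, hc]
  have hu : ∀ (φ : CTL ℕ), u φ.code ≠ 0 := by
    intro φ
    have : ∃ ψ : CTL ℕ, ψ.code = φ.code := ⟨φ, rfl⟩
    simp [u, this]
  have ht : ∀ (φ : CTL ℕ), t φ.code ≠ 0 ↔ φ.guarded := by
    intro φ
    simp [t, hc]
  have hw : ∀ (φ : CTL ℕ) y, w (q φ.code y) ≠ 0 ↔ y ∈ φ.freeVars := by
    intro φ y
    simp [w, q_iff, hc]
  have hEp : ∀ v w, Ep v w ↔ S.E (e v) (e w) := fun _ _ => Iff.rfl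
  refine ⟨Sp, Ep, Lp, u, w, t, e.symm S.vI, ?_, ?_, hu φ, (ht φ).2 hg, ?_, ?_⟩
  · intro v
    obtain ⟨x, hx⟩ := S.succ (e v)
    obtain ⟨p, hp⟩ := exists_q2 (fun i k => if i = 0 then v k else e.symm x k)
    refine ⟨p, by simp [hp], ?_⟩
    simpa [hp, Ep] using hx
  · intro c hcu
    have : ∃ φ : CTL ℕ, φ.code = c := by
      by_contra hne
      exact hcu (by simp [u, hne])
    obtain ⟨φ, rfl⟩ := this
    cases φ with
    | atom a x =>
      exact Or.inl ⟨a, x, rfl, fun A r => hSp _ _ _, (hw _ _).2 (by simp [CTL.freeVars])⟩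
    | neg φ =>
      refine Or.inr (Or.inl ⟨φ.code, rfl, hu _, fun A r => ?_, fun y => ?_, ?_⟩)
      · rw [hSp, hSp]; rfl
      · rw [hw, hw]; exact id
      · rw [ht, ht]; exact id
    | disj φ ψ =>
      refine Or.inr (Or.inr (Or.inl ⟨φ.code, ψ.code, rfl, hu _, hu _, fun A r => ?_, fun y => ?_, ?_⟩))
      · rw [hSp, hSp, hSp]; rfl
      · rw [hw, hw, hw]; exact id
      · rw [ht, ht, ht]; exact id
    | next φ =>
      refine Or.inr (Or.inr (Or.inr (Or.inl ⟨φ.code, rfl, hu _, fun A r => ?_, fun y => ?_, ?_⟩)))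
      · simp only [hSp]; exact sat_next S e φ A r
      · rw [hw, hw]; exact id
      · by_contra h; exact (ht (.next φ)).1 h
    | untl φ ψ =>
      refine Or.inr (Or.inr (Or.inr (Or.inr (Or.inl
        ⟨φ.code, ψ.code, rfl, hu _, hu _, fun A r => ?_, fun y => ?_, ?_⟩))))
      · simp only [hSp]; exact sat_untl S e φ ψ A r
      · rw [hw, hw, hw]; exact id
      · by_contra h; exact (ht (.untl φ ψ)).1 h
    | ex x φ =>
      refine Or.inr (Or.inr (Or.inr (Or.inr (Or.inr (Or.inl
        ⟨x, φ.code, rfl, hu _, fun A r => ?_, fun y => ?_⟩)))))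
      · simp only [hSp]; exact sat_ex S e Ep hEp φ A x r
      · rw [hw, hw]; exact id
    | all x φ =>
      refine Or.inr (Or.inr (Or.inr (Or.inr (Or.inr (Or.inr
        ⟨x, φ.code, rfl, hu _, fun A r => ?_, fun y => ?_⟩)))))
      · simp only [hSp]; exact sat_all S e Ep hEp φ A x r
      · rw [hw, hw]; exact id
  · intro y
    by_contra h
    have := (hw φ y).1 h
    rw [hf] at this
    exact this
  · intro p hp h0 B hB
    rw [hSp]
    have h1 : dec e B = fun _ => decP e p := by
      funext x i
      simp [dec, decP, hB]
    rw [h1]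
    refine hM _ ((dec_path S e Ep hEp p).1 hp) ?_
    have : (fun k => p (q 0 k)) = e.symm S.vI := funext h0
    simp [decP, this]

lemma mem_of_upSpec {n : ℕ} (Sp Ep Lp u w t v0) (h : UpSpec Sp Ep Lp u w t v0 n) :
    n ∈ CTLSatCodes := by
  obtain ⟨hs, hC, hun, htn, hwn, hfin⟩ := h
  have hs' : ∀ v : ℕ → ℕ, ∃ w, Ep v w := by
    intro v
    obtain ⟨p, h1, h2⟩ := hs v
    have : (fun k => p (q 0 k)) = v := funext h1
    rw [this] at h2
    exact ⟨_, h2⟩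
  obtain ⟨S, e, hE, hL, hI⟩ : ∃ (S : TS ℕ) (e : (ℕ → ℕ) ≃ S.V),
      (∀ v w, Ep v w ↔ S.E (e v) (e w)) ∧ (∀ a v, Lp a v ↔ a ∈ S.lab (e v)) ∧
      S.vI = e v0 :=
    ⟨⟨ℕ → ℕ, Ep, v0, fun v => {a | Lp a v}, hs'⟩, Equiv.refl _, fun _ _ => Iff.rfl,
      fun _ _ => Iff.rfl, rfl⟩
  have key : ∀ c, u c ≠ 0 → ∃ φ : CTL ℕ, φ.code = c ∧
      (∀ A r, Sp c r A ↔ φ.sat S (dec e A) r) ∧ (∀ y ∈ φ.freeVars, w (q c y) ≠ 0) ∧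
      (t c ≠ 0 → φ.guarded) := by
    intro c
    induction c using Nat.strong_induction_on with
    | _ c ih =>
    intro hc
    rcases hC c hc with ⟨a, x, rfl, h1, h2⟩ | ⟨d, rfl, h0, h1, h2, h3⟩ |
      ⟨d, d', rfl, h0, h0', h1, h2, h3⟩ | ⟨d, rfl, h0, h1, h2, h3⟩ |
      ⟨d, d', rfl, h0, h0', h1, h2, h3⟩ | ⟨x, d, rfl, h0, h1, h2⟩ | ⟨x, d, rfl, h0, h1, h2⟩
    · refine ⟨.atom a x, rfl, fun A r => ?_, ?_, fun _ => trivial⟩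
      · rw [h1, hL]; rfl
      · intro y hy
        rw [CTL.freeVars, Set.mem_singleton_iff] at hy
        rw [hy]; exact h2
    · obtain ⟨φ, rfl, i1, i2, i3⟩ := ih d (lt_pair_of_pos (by norm_num)) h0
      exact ⟨.neg φ, rfl, fun A r => by rw [h1, i1]; rfl, fun y hy => h2 y (i2 y hy),
        fun h => i3 (h3 h)⟩
    · obtain ⟨φ, rfl, i1, i2, i3⟩ := ih d
        (lt_of_le_of_lt (Nat.left_le_pair _ _) (lt_pair_of_pos (by norm_num))) h0
      obtain ⟨ψ, rfl, j1, j2, j3⟩ := ih d'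
        (lt_of_le_of_lt (Nat.right_le_pair _ _) (lt_pair_of_pos (by norm_num))) h0'
      exact ⟨.disj φ ψ, rfl, fun A r => by rw [h1, i1, j1]; rfl,
        fun y hy => h2 y (hy.imp (i2 y) (j2 y)), fun h => ⟨i3 (h3 h).1, j3 (h3 h).2⟩⟩
    · obtain ⟨φ, rfl, i1, i2, i3⟩ := ih d (lt_pair_of_pos (by norm_num)) h0
      exact ⟨.next φ, rfl, fun A r => by simp only [h1, i1]; exact (sat_next S e φ A r).symm,
        fun y hy => h2 y (i2 y hy), fun h => (h h3).elim⟩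
    · obtain ⟨φ, rfl, i1, i2, i3⟩ := ih d
        (lt_of_le_of_lt (Nat.left_le_pair _ _) (lt_pair_of_pos (by norm_num))) h0
      obtain ⟨ψ, rfl, j1, j2, j3⟩ := ih d'
        (lt_of_le_of_lt (Nat.right_le_pair _ _) (lt_pair_of_pos (by norm_num))) h0'
      exact ⟨.untl φ ψ, rfl,
        fun A r => by simp only [h1, i1, j1]; exact (sat_untl S e φ ψ A r).symm,
        fun y hy => h2 y (hy.imp (i2 y) (j2 y)), fun h => (h h3).elim⟩
    · obtain ⟨φ, rfl, i1, i2, i3⟩ := ih d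
        (lt_of_le_of_lt (Nat.right_le_pair _ _) (lt_pair_of_pos (by norm_num))) h0
      exact ⟨.ex x φ, rfl,
        fun A r => by simp only [h1, i1]; exact (sat_ex S e Ep hE φ A x r).symm,
        fun y hy => h2 y ⟨i2 y hy.1, hy.2⟩, fun _ => trivial⟩
    · obtain ⟨φ, rfl, i1, i2, i3⟩ := ih d
        (lt_of_le_of_lt (Nat.right_le_pair _ _) (lt_pair_of_pos (by norm_num))) h0
      exact ⟨.all x φ, rfl,
        fun A r => by simp only [h1, i1]; exact (sat_all S e Ep hE φ A x r).symm,
        fun y hy => h2 y ⟨i2 y hy.1, hy.2⟩, fun _ => trivial⟩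
  obtain ⟨φ, rfl, i1, i2, i3⟩ := key n hun
  refine ⟨φ, ⟨?_, i3 htn⟩, rfl, S, ?_⟩
  · ext y
    simp only [Set.mem_empty_iff_false, iff_false]
    exact fun hy => i2 y hy (hwn y)
  · intro ρ h1 h2
    obtain ⟨p, rfl⟩ := decP_surj e ρ
    obtain ⟨B, hB⟩ := exists_q3 (fun _ i k => p (q i k))
    have h3 := hfin p ((dec_path S e Ep hE p).2 h1) (by
      rw [hI] at h2
      exact fun k => congrFun (e.injective h2) k) B hB
    rw [i1] at h3
    have h4 : dec e B = fun _ => decP e p := by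
      funext x i
      simp [dec, decP, hB]
    rw [h4] at h3
    exact h3

end HC
namespace HC

/-! ### Membership of `CTLSatCodes` in Σ²₁: the formula -/

namespace T2
open T2Form T2Term

def conj (φ ψ : T2Form) : T2Form := .neg (.disj (.neg φ) (.neg ψ))
def imp (φ ψ : T2Form) : T2Form := .disj (.neg φ) ψ
def iff (φ ψ : T2Form) : T2Form := conj (imp φ ψ) (imp ψ φ)
def nz (s : T2Term) : T2Form := .neg (.eq s .zero)
def qT (s t : T2Term) : T2Term := .add (.mul (.add s t) (.add s t)) s
def numT : ℕ → T2Term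
  | 0 => .zero
  | k + 1 => .add (numT k) .one
/-- `Nat.pair s t = z` -/
def pairF (s t z : T2Term) : T2Form :=
  .disj (conj (.lt s t) (.eq (.add (.mul t t) s) z))
    (conj (.neg (.lt s t)) (.eq (.add (.add (.mul s s) s) t) z))

variable (v : ℕ → ℕ) (g : ℕ → ℕ → ℕ) (G : ℕ → (ℕ → ℕ) → ℕ)

@[simp] lemma sat_conj (φ ψ : T2Form) :
    (conj φ ψ).sat v g G ↔ φ.sat v g G ∧ ψ.sat v g G := by
  simp [conj, T2Form.sat]
@[simp] lemma sat_imp (φ ψ : T2Form) :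
    (imp φ ψ).sat v g G ↔ (φ.sat v g G → ψ.sat v g G) := by
  simp [imp, T2Form.sat, imp_iff_not_or]
@[simp] lemma sat_iff (φ ψ : T2Form) :
    (iff φ ψ).sat v g G ↔ (φ.sat v g G ↔ ψ.sat v g G) := by
  simp [iff, iff_def]
@[simp] lemma sat_nz (s : T2Term) : (nz s).sat v g G ↔ s.eval v g G ≠ 0 := by
  simp [nz, T2Form.sat, T2Term.eval]
@[simp] lemma eval_qT (s t : T2Term) : (qT s t).eval v g G = q (s.eval v g G) (t.eval v g G) := by
  simp [qT, T2Term.eval, q]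
@[simp] lemma eval_numT (k : ℕ) : (numT k).eval v g G = k := by
  induction k with
  | zero => rfl
  | succ k ih => simp [numT, T2Term.eval, ih]
@[simp] lemma sat_pairF (s t z : T2Term) : (pairF s t z).sat v g G ↔
    Nat.pair (s.eval v g G) (t.eval v g G) = z.eval v g G := by
  simp only [pairF, T2Form.sat, sat_conj, T2Term.eval, Nat.pair]
  split <;> simp [*]

def SpG (c r : ℕ) (A : ℕ → ℕ) : Prop :=
  ∃ h : ℕ → ℕ, h 0 = c ∧ h 1 = r ∧ (∀ m, h (m + 1 + 1) = A m) ∧ G 0 h = 0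
def EpG (x y : ℕ → ℕ) : Prop :=
  ∃ h : ℕ → ℕ, (∀ k, h (q 0 k) = x k) ∧ (∀ k, h (q 1 k) = y k) ∧ G 1 h = 0
def LpG (a : ℕ) (x : ℕ → ℕ) : Prop :=
  ∃ h : ℕ → ℕ, h 0 = a ∧ (∀ k, h (k + 1) = x k) ∧ G 2 h = 0

def SatF (c r A : ℕ) : T2Form :=
  .exF 100 (conj (.eq (.app1 100 .zero) (.var c)) (conj (.eq (.app1 100 .one) (.var r))
    (conj (.allN 100 (.eq (.app1 100 (.add (.add (.var 100) .one) .one)) (.app1 A (.var 100))))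
      (.eq (.app2 0 100) .zero))))
def EdgeF (p i : ℕ) : T2Form :=
  .exF 100 (conj (.allN 100 (.eq (.app1 100 (qT .zero (.var 100))) (.app1 p (qT (.var i) (.var 100)))))
    (conj (.allN 100 (.eq (.app1 100 (qT .one (.var 100)))
      (.app1 p (qT (.add (.var i) .one) (.var 100))))) (.eq (.app2 1 100) .zero)))
def LabF (a A x : ℕ) : T2Form :=
  .exF 100 (conj (.eq (.app1 100 .zero) (.var a))
    (conj (.allN 100 (.eq (.app1 100 (.add (.var 100) .one))
      (.app1 A (qT (.var x) (qT .zero (.var 100)))))) (.eq (.app2 2 100) .zero)))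
def pathF (p : ℕ) : T2Form := .allN 50 (EdgeF p 50)
def startF (A r p : ℕ) : T2Form :=
  .allN 50 (.eq (.app1 p (qT .zero (.var 50))) (.app1 A (qT (.var r) (qT .zero (.var 50)))))
def shiftF (A : ℕ) (j : T2Term) (B : ℕ) : T2Form :=
  .allN 50 (.allN 51 (.allN 52 (.eq (.app1 B (qT (.var 50) (qT (.var 51) (.var 52))))
    (.app1 A (qT (.var 50) (qT (.add (.var 51) j) (.var 52)))))))
def updF (A x p B : ℕ) : T2Form :=
  conj (.allN 50 (imp (.neg (.eq (.var 50) (.var x))) (.allN 51 (.allN 52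
    (.eq (.app1 B (qT (.var 50) (qT (.var 51) (.var 52))))
      (.app1 A (qT (.var 50) (qT (.var 51) (.var 52)))))))))
    (.allN 51 (.allN 52 (.eq (.app1 B (qT (.var x) (qT (.var 51) (.var 52))))
      (.app1 p (qT (.var 51) (.var 52))))))

lemma sat_SatF {c r A : ℕ} (hA : A ≠ 100) :
    (SatF c r A).sat v g G ↔ SpG G (v c) (v r) (g A) := by
  simp [SatF, SpG, T2Form.sat, T2Term.eval, hA]
lemma sat_EdgeF {p i : ℕ} (hp : p ≠ 100) (hi : i ≠ 100) :
    (EdgeF p i).sat v g G ↔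
      EpG G (fun k => g p (q (v i) k)) (fun k => g p (q (v i + 1) k)) := by
  simp [EdgeF, EpG, T2Form.sat, T2Term.eval, hp, hi]
lemma sat_LabF {a A x : ℕ} (hA : A ≠ 100) (hx : x ≠ 100) :
    (LabF a A x).sat v g G ↔ LpG G (v a) (fun k => g A (q (v x) (q 0 k))) := by
  simp [LabF, LpG, T2Form.sat, T2Term.eval, hA, hx]
lemma sat_pathF {p : ℕ} (hp : p ≠ 100) : (pathF p).sat v g G ↔ pathR (EpG G) (g p) := by
  simp [pathF, pathR, T2Form.sat, sat_EdgeF, hp]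
lemma sat_startF {A r p : ℕ} (hr : r ≠ 50) :
    (startF A r p).sat v g G ↔ startR (g A) (v r) (g p) := by
  simp [startF, startR, T2Form.sat, T2Term.eval, hr]
lemma sat_shiftF {A j B : ℕ} (hr : j < 50) :
    (shiftF A (.var j) B).sat v g G ↔ shiftR (g A) (v j) (g B) := by
  have h1 : j ≠ 50 := by omega
  have h2 : j ≠ 51 := by omega
  have h3 : j ≠ 52 := by omega
  simp [shiftF, shiftR, T2Form.sat, T2Term.eval, h1, h2, h3]
lemma sat_shiftF1 {A B : ℕ} :
    (shiftF A .one B).sat v g G ↔ shiftR (g A) 1 (g B) := by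
  simp [shiftF, shiftR, T2Form.sat, T2Term.eval]
lemma sat_updF {A x p B : ℕ} (hr : x < 50) :
    (updF A x p B).sat v g G ↔ updR (g A) (v x) (g p) (g B) := by
  have h1 : x ≠ 50 := by omega
  have h2 : x ≠ 51 := by omega
  have h3 : x ≠ 52 := by omega
  simp [updF, updR, T2Form.sat, T2Term.eval, h1, h2, h3]

/- number variables: 1 = `c`, 2, 3 = subcodes, 4 = pair, 5 = `r`, 6 = `y`, 7 = `j`, 8 = `j'`;
function variables: 0 = `u`, 1 = `w`, 2 = `t`, 3 = `v0`, 4 = `A`, 5 = `B`, 6 = `p`. -/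
def isU (x : ℕ) : T2Form := nz (.app1 0 (.var x))
def isW (c y : ℕ) : T2Form := nz (.app1 1 (qT (.var c) (.var y)))
def isT (x : ℕ) : T2Form := nz (.app1 2 (.var x))
def AR (φ : T2Form) : T2Form := .allF 4 (.allN 5 (iff (SatF 1 5 4) φ))
def ex1 (tag : ℕ) (φ : T2Form) : T2Form := .exN 2 (conj (pairF (numT tag) (.var 2) (.var 1)) φ)
def ex2 (tag : ℕ) (φ : T2Form) : T2Form := .exN 2 (.exN 3 (.exN 4
  (conj (pairF (.var 2) (.var 3) (.var 4)) (conj (pairF (numT tag) (.var 4) (.var 1)) φ))))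

def fAtom : T2Form := ex2 0 (conj (AR (LabF 2 4 3)) (isW 1 3))
def fNeg : T2Form := ex1 1 (conj (isU 2) (conj (AR (.neg (SatF 2 5 4)))
  (conj (.allN 6 (imp (isW 2 6) (isW 1 6))) (imp (isT 1) (isT 2)))))
def fDisj : T2Form := ex2 2 (conj (isU 2) (conj (isU 3)
  (conj (AR (.disj (SatF 2 5 4) (SatF 3 5 4)))
  (conj (.allN 6 (imp (.disj (isW 2 6) (isW 3 6)) (isW 1 6)))
    (imp (isT 1) (conj (isT 2) (isT 3)))))))
def fNext : T2Form := ex1 3 (conj (isU 2)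
  (conj (AR (.exF 5 (conj (shiftF 4 .one 5) (SatF 2 5 5))))
  (conj (.allN 6 (imp (isW 2 6) (isW 1 6))) (.eq (.app1 2 (.var 1)) .zero))))
def fUntl : T2Form := ex2 4 (conj (isU 2) (conj (isU 3)
  (conj (AR (.exN 7 (conj (.exF 5 (conj (shiftF 4 (.var 7) 5) (SatF 3 5 5)))
    (.allN 8 (imp (.lt (.var 8) (.var 7)) (.exF 5 (conj (shiftF 4 (.var 8) 5) (SatF 2 5 5))))))))
  (conj (.allN 6 (imp (.disj (isW 2 6) (isW 3 6)) (isW 1 6)))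
    (.eq (.app1 2 (.var 1)) .zero)))))
def fEx : T2Form := ex2 5 (conj (isU 3)
  (conj (AR (.exF 6 (conj (pathF 6) (conj (startF 4 5 6)
    (.exF 5 (conj (updF 4 2 6 5) (SatF 3 2 5)))))))
  (.allN 6 (imp (conj (isW 3 6) (.neg (.eq (.var 6) (.var 2)))) (isW 1 6)))))
def fAll : T2Form := ex2 6 (conj (isU 3)
  (conj (AR (.allF 6 (imp (pathF 6) (imp (startF 4 5 6)
    (.exF 5 (conj (updF 4 2 6 5) (SatF 3 2 5)))))))
  (.allN 6 (imp (conj (isW 3 6) (.neg (.eq (.var 6) (.var 2)))) (isW 1 6)))))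

lemma sat_fAtom : fAtom.sat v g G ↔ clAtom (SpG G) (LpG G) (g 1) (v 1) := by
  simp [fAtom, clAtom, ex2, AR, isW, T2Form.sat, T2Term.eval,
    sat_SatF, sat_LabF]
lemma sat_fNeg : fNeg.sat v g G ↔ clNeg (SpG G) (g 0) (g 1) (g 2) (v 1) := by
  simp [fNeg, clNeg, ex1, AR, isW, isU, isT, T2Form.sat, T2Term.eval,
    sat_SatF]
lemma sat_fDisj : fDisj.sat v g G ↔ clDisj (SpG G) (g 0) (g 1) (g 2) (v 1) := by
  simp [fDisj, clDisj, ex2, AR, isW, isU, isT, T2Form.sat, T2Term.eval,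
    sat_SatF]
lemma sat_fNext : fNext.sat v g G ↔ clNext (SpG G) (g 0) (g 1) (g 2) (v 1) := by
  simp [fNext, clNext, ex1, AR, isW, isU, isT, T2Form.sat, T2Term.eval,
    sat_SatF, sat_shiftF1]
lemma sat_fUntl : fUntl.sat v g G ↔ clUntl (SpG G) (g 0) (g 1) (g 2) (v 1) := by
  simp [fUntl, clUntl, ex2, AR, isW, isU, isT, T2Form.sat, T2Term.eval,
    sat_SatF, sat_shiftF]
lemma sat_fEx : fEx.sat v g G ↔ clEx (SpG G) (EpG G) (g 0) (g 1) (v 1) := by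
  simp [fEx, clEx, ex2, AR, isW, isU, T2Form.sat, T2Term.eval,
    sat_SatF, sat_pathF, sat_startF, sat_updF]
lemma sat_fAll : fAll.sat v g G ↔ clAll (SpG G) (EpG G) (g 0) (g 1) (v 1) := by
  simp [fAll, clAll, ex2, AR, isW, isU, T2Form.sat, T2Term.eval,
    sat_SatF, sat_pathF, sat_startF, sat_updF]

def fClause : T2Form :=
  .disj fAtom (.disj fNeg (.disj fDisj (.disj fNext (.disj fUntl (.disj fEx fAll)))))

lemma sat_fClause : fClause.sat v g G ↔
    Clause (SpG G) (EpG G) (LpG G) (g 0) (g 1) (g 2) (v 1) := by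
  simp only [fClause, Clause, T2Form.sat, sat_fAtom, sat_fNeg, sat_fDisj, sat_fNext,
    sat_fUntl, sat_fEx, sat_fAll]

def fTot : T2Form := .allF 4 (.exF 6 (conj
  (.allN 6 (.eq (.app1 6 (qT .zero (.var 6))) (.app1 4 (.var 6))))
  (.exN 7 (conj (.eq (.var 7) .zero) (EdgeF 6 7)))))
def fFin : T2Form := .allF 6 (imp (pathF 6) (imp
  (.allN 6 (.eq (.app1 6 (qT .zero (.var 6))) (.app1 3 (.var 6))))
  (.allF 5 (imp (.allN 6 (.allN 7 (.allN 8
    (.eq (.app1 5 (qT (.var 6) (qT (.var 7) (.var 8)))) (.app1 6 (qT (.var 7) (.var 8)))))))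
    (.exN 5 (conj (.eq (.var 5) .zero) (SatF 0 5 5)))))))
def fUp : T2Form := .exF 0 (.exF 1 (.exF 2 (.exF 3 (conj fTot
  (conj (.allN 1 (imp (isU 1) fClause)) (conj (isU 0) (conj (isT 0)
    (conj (.allN 6 (.eq (.app1 1 (qT (.var 0) (.var 6))) .zero)) fFin))))))))

lemma sat_fTot : fTot.sat v g G ↔ (∀ v : ℕ → ℕ, ∃ p : ℕ → ℕ, (∀ k, p (q 0 k) = v k) ∧
      EpG G (fun k => p (q 0 k)) (fun k => p (q (0 + 1) k))) := by
  simp [fTot, T2Form.sat, T2Term.eval, sat_EdgeF]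
lemma sat_fFin : fFin.sat v g G ↔ ∀ p, pathR (EpG G) p → (∀ k, p (q 0 k) = g 3 k) →
    ∀ B, (∀ x i k, B (q x (q i k)) = p (q i k)) → SpG G (v 0) 0 B := by
  simp [fFin, T2Form.sat, T2Term.eval, sat_SatF, sat_pathF]
lemma sat_fUp : fUp.sat v g G ↔
    ∃ u w t v0, UpSpec (SpG G) (EpG G) (LpG G) u w t v0 (v 0) := by
  simp [fUp, UpSpec, T2Form.sat, T2Term.eval, sat_fTot, sat_fFin,
    sat_fClause, isU, isT]

lemma exists_G (Sp : ℕ → ℕ → (ℕ → ℕ) → Prop) (Ep : (ℕ → ℕ) → (ℕ → ℕ) → Prop)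
    (Lp : ℕ → (ℕ → ℕ) → Prop) : ∃ G, SpG G = Sp ∧ EpG G = Ep ∧ LpG G = Lp := by
  classical
  refine ⟨fun i h => if i = 0 then (if Sp (h 0) (h 1) (fun m => h (m + 1 + 1)) then 0 else 1)
    else if i = 1 then (if Ep (fun k => h (q 0 k)) (fun k => h (q 1 k)) then 0 else 1)
    else (if Lp (h 0) (fun m => h (m + 1)) then 0 else 1), ?_, ?_, ?_⟩
  · funext c r A
    simp only [SpG, eq_iff_iff]
    constructor
    · rintro ⟨h, rfl, rfl, h3, h4⟩
      obtain rfl : (fun m => h (m + 1 + 1)) = A := funext h3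
      simpa using h4
    · intro h
      refine ⟨fun | 0 => c | 1 => r | m + 2 => A m, rfl, rfl, fun _ => rfl, ?_⟩
      simpa using h
  · funext x y
    simp only [EpG, eq_iff_iff]
    constructor
    · rintro ⟨h, h2, h3, h4⟩
      obtain rfl : (fun k => h (q 0 k)) = x := funext h2
      obtain rfl : (fun k => h (q 1 k)) = y := funext h3
      simpa using h4
    · intro h
      obtain ⟨p, hp⟩ := exists_q2 (fun i k => if i = 0 then x k else y k)
      refine ⟨p, by simp [hp], by simp [hp], ?_⟩
      simpa [hp] using h
  · funext c A
    simp only [LpG, eq_iff_iff]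
    constructor
    · rintro ⟨h, rfl, h3, h4⟩
      obtain rfl : (fun m => h (m + 1)) = A := funext h3
      simpa using h4
    · intro h
      refine ⟨fun | 0 => c | m + 1 => A m, rfl, fun _ => rfl, ?_⟩
      simpa using h

end T2

theorem upper : Sigma21 CTLSatCodes := by
  refine ⟨T2.fUp, fun x => ?_⟩
  simp only [T2.sat_fUp]
  constructor
  · intro h
    obtain ⟨Sp, Ep, Lp, u, w, t, v0, h⟩ := upSpec_of_mem h
    obtain ⟨G, rfl, rfl, rfl⟩ := T2.exists_G Sp Ep Lp
    exact ⟨G, u, w, t, v0, h⟩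
  · rintro ⟨G, u, w, t, v0, h⟩
    exact mem_of_upSpec _ _ _ _ _ _ _ h

end HC
namespace HC

/-! ### Hardness: an intermediate logic over sets of natural numbers -/

/-- First-order formulas over sets of naturals with uninterpreted ternary relations. -/
inductive L : Type where
  | rel : ℕ → ℕ → ℕ → ℕ → L
  | sub : ℕ → ℕ → L
  | suc : ℕ → ℕ → L
  | lt : ℕ → ℕ → L
  | zero : ℕ → L
  | sing : ℕ → L
  | neg : L → L
  | disj : L → L → L
  | ex : ℕ → L → L

abbrev Rel := ℕ → Set ℕ → Set ℕ → Set ℕ → Prop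

def L.sat (R : Rel) : L → (ℕ → Set ℕ) → Prop
  | .rel j x y z, σ => R j (σ x) (σ y) (σ z)
  | .sub x y, σ => ∀ n, n ∈ σ x → n ∈ σ y
  | .suc x y, σ => ∃ n, n ∈ σ x ∧ n + 1 ∈ σ y
  | .lt x y, σ => ∃ n, n ∈ σ x ∧ ∃ m, n + 1 + m ∈ σ y
  | .zero x, σ => 0 ∈ σ x
  | .sing x, σ => ∃ n, σ x = {n}
  | .neg φ, σ => ¬ φ.sat R σ
  | .disj φ ψ, σ => φ.sat R σ ∨ ψ.sat R σ
  | .ex x φ, σ => ∃ X, φ.sat R (Function.update σ x X)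

def L.fv : L → Set ℕ
  | .rel _ x y z => {x, y, z}
  | .sub x y => {x, y}
  | .suc x y => {x, y}
  | .lt x y => {x, y}
  | .zero x => {x}
  | .sing x => {x}
  | .neg φ => φ.fv
  | .disj φ ψ => φ.fv ∪ ψ.fv
  | .ex x φ => φ.fv \ {x}

/-! ### Translation of the intermediate logic to HyperCTL* -/

def cconj (φ ψ : CTL ℕ) : CTL ℕ := .neg (.disj (.neg φ) (.neg ψ))
def cimp (φ ψ : CTL ℕ) : CTL ℕ := .disj (.neg φ) ψ
def ciff (φ ψ : CTL ℕ) : CTL ℕ := cconj (cimp φ ψ) (cimp ψ φ)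
def cF (w : ℕ) (φ : CTL ℕ) : CTL ℕ := .untl (.disj (.atom 0 w) (.neg (.atom 0 w))) φ
def cG (w : ℕ) (φ : CTL ℕ) : CTL ℕ := .neg (cF w (.neg φ))

section
variable (S : TS ℕ) (As : ℕ → ℕ → S.V) (r : ℕ)
@[simp] lemma sat_cconj (φ ψ : CTL ℕ) :
    (cconj φ ψ).sat S As r ↔ φ.sat S As r ∧ ψ.sat S As r := by
  simp [cconj, CTL.sat]
@[simp] lemma sat_cimp (φ ψ : CTL ℕ) :
    (cimp φ ψ).sat S As r ↔ (φ.sat S As r → ψ.sat S As r) := by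
  simp [cimp, CTL.sat, imp_iff_not_or]
@[simp] lemma sat_ciff (φ ψ : CTL ℕ) :
    (ciff φ ψ).sat S As r ↔ (φ.sat S As r ↔ ψ.sat S As r) := by
  simp [ciff, iff_def]
@[simp] lemma sat_cF (w : ℕ) (φ : CTL ℕ) :
    (cF w φ).sat S As r ↔ ∃ j, φ.sat S (fun x i => As x (i + j)) r := by
  simp [cF, CTL.sat, em]
@[simp] lemma sat_cG (w : ℕ) (φ : CTL ℕ) :
    (cG w φ).sat S As r ↔ ∀ j, φ.sat S (fun x i => As x (i + j)) r := by
  simp [cG, CTL.sat]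
end

@[simp] lemma fv_cconj (φ ψ : CTL ℕ) : (cconj φ ψ).freeVars = φ.freeVars ∪ ψ.freeVars := rfl
@[simp] lemma fv_cimp (φ ψ : CTL ℕ) : (cimp φ ψ).freeVars = φ.freeVars ∪ ψ.freeVars := rfl
@[simp] lemma fv_ciff (φ ψ : CTL ℕ) : (ciff φ ψ).freeVars = φ.freeVars ∪ ψ.freeVars := by
  simp [ciff, Set.union_comm]
@[simp] lemma fv_cF (w : ℕ) (φ : CTL ℕ) : (cF w φ).freeVars = {w} ∪ φ.freeVars := by
  simp [cF, CTL.freeVars]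
@[simp] lemma fv_cG (w : ℕ) (φ : CTL ℕ) : (cG w φ).freeVars = {w} ∪ φ.freeVars := by
  simp [cG, CTL.freeVars]

def tr : L → CTL ℕ
  | .rel j x y z => .ex (x + y + z + 1) (cconj (.next (.atom (5 + j) (x + y + z + 1)))
      (.next (cG (x + y + z + 1) (cconj (ciff (.atom 1 (x + y + z + 1)) (.atom 0 x))
        (cconj (ciff (.atom 2 (x + y + z + 1)) (.atom 0 y))
          (ciff (.atom 3 (x + y + z + 1)) (.atom 0 z)))))))
  | .sub x y => .next (cG x (cimp (.atom 0 x) (.atom 0 y)))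
  | .suc x y => .next (cF x (cconj (.atom 0 x) (.next (.atom 0 y))))
  | .lt x y => .next (cF x (cconj (.atom 0 x) (.next (cF x (.atom 0 y)))))
  | .zero x => .next (.atom 0 x)
  | .sing x => .next (cconj (cF x (.atom 0 x))
      (cG x (cimp (.atom 0 x) (.next (cG x (.neg (.atom 0 x)))))))
  | .neg φ => .neg (tr φ)
  | .disj φ ψ => .disj (tr φ) (tr ψ)
  | .ex x φ => .ex x (tr φ)

def pset (S : TS ℕ) (ρ : ℕ → S.V) : Set ℕ := {n | 0 ∈ S.lab (ρ (n + 1))}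

def RS (S : TS ℕ) : Rel := fun j X Y Z =>
  ∃ ρ : ℕ → S.V, S.IsPath ρ ∧ ρ 0 = S.vI ∧ 5 + j ∈ S.lab (ρ 1) ∧
    ∀ n, (1 ∈ S.lab (ρ (n + 1)) ↔ n ∈ X) ∧ (2 ∈ S.lab (ρ (n + 1)) ↔ n ∈ Y) ∧
      (3 ∈ S.lab (ρ (n + 1)) ↔ n ∈ Z)

lemma sing_iff (A : Set ℕ) :
    ((∃ n, n ∈ A) ∧ ∀ n, n ∈ A → ∀ m, ¬ (n + 1 + m ∈ A)) ↔ ∃ n, A = {n} := by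
  constructor
  · rintro ⟨⟨n, hn⟩, h⟩
    refine ⟨n, ?_⟩
    ext m
    simp only [Set.mem_singleton_iff]
    constructor
    · intro hm
      rcases lt_trichotomy m n with h1 | h1 | h1
      · have := h m hm (n - m - 1)
        rw [show m + 1 + (n - m - 1) = n by omega] at this
        exact (this hn).elim
      · exact h1
      · have := h n hn (m - n - 1)
        rw [show n + 1 + (m - n - 1) = m by omega] at this
        exact (this hm).elim
    · rintro rfl; exact hn
  · rintro ⟨n, rfl⟩
    simp only [Set.mem_singleton_iff]
    refine ⟨⟨n, rfl⟩, ?_⟩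
    intro m hm k
    omega

lemma pset_update (S : TS ℕ) (As : ℕ → ℕ → S.V) (x : ℕ) (ρ : ℕ → S.V) :
    (fun y => pset S (Function.update As x ρ y)) =
      Function.update (fun y => pset S (As y)) x (pset S ρ) := by
  funext y
  by_cases h : y = x
  · subst h; simp
  · simp [Function.update_of_ne h]

lemma tr_sat (S : TS ℕ)
    (full : ∀ X : Set ℕ, ∃ ρ : ℕ → S.V, S.IsPath ρ ∧ ρ 0 = S.vI ∧ pset S ρ = X) :
    ∀ (φ : L) (As : ℕ → ℕ → S.V) (r : ℕ), As r 0 = S.vI →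
      ((tr φ).sat S As r ↔ φ.sat (RS S) (fun x => pset S (As x))) := by
  intro φ
  induction φ with
  | rel j x y z =>
    intro As r hr
    have h1 : x ≠ x + y + z + 1 := by omega
    have h2 : y ≠ x + y + z + 1 := by omega
    have h3 : z ≠ x + y + z + 1 := by omega
    simp [tr, CTL.sat, L.sat, RS, hr, pset, Function.update_of_ne h1, Function.update_of_ne h2,
      Function.update_of_ne h3]
  | sub x y => intro As r hr; simp [tr, CTL.sat, L.sat, pset]
  | suc x y => intro As r hr; simp [tr, CTL.sat, L.sat, pset, add_comm, add_left_comm]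
  | lt x y => intro As r hr; simp [tr, CTL.sat, L.sat, pset, add_comm, add_left_comm]
  | zero x => intro As r hr; simp [tr, CTL.sat, L.sat, pset]
  | sing x =>
    intro As r hr
    simp only [L.sat]
    rw [← sing_iff]
    simp [tr, CTL.sat, pset, add_comm, add_left_comm]
  | neg φ ih => intro As r hr; simp only [tr, CTL.sat, L.sat, ih As r hr]
  | disj φ ψ ih1 ih2 =>
    intro As r hr; simp only [tr, CTL.sat, L.sat, ih1 As r hr, ih2 As r hr]
  | ex x φ ih =>
    intro As r hr
    simp only [tr, CTL.sat, L.sat, hr]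
    constructor
    · rintro ⟨ρ, h1, h2, h3⟩
      rw [ih _ _ (by simp [h2]), pset_update] at h3
      exact ⟨_, h3⟩
    · rintro ⟨X, hX⟩
      obtain ⟨ρ, h1, h2, rfl⟩ := full X
      refine ⟨ρ, h1, h2, ?_⟩
      rw [ih _ _ (by simp [h2]), pset_update]
      exact hX

lemma tr_fv (φ : L) : (tr φ).freeVars ⊆ φ.fv := by
  induction φ with
  | neg φ ih => exact ih
  | disj φ ψ ih1 ih2 => exact Set.union_subset_union ih1 ih2
  | ex x φ ih => exact Set.sdiff_subset_sdiff_left ih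
  | rel j x y z =>
    intro i hi
    simp [tr, CTL.freeVars] at hi
    simp [L.fv]
    tauto
  | _ =>
    intro i hi
    simp [tr, CTL.freeVars] at hi
    simp [L.fv]
    tauto

/-! ### Forcing all sets to occur as paths -/

def FULL : CTL ℕ := .all 0 (cconj (.atom 4 0) (cG 0 (cimp (.atom 4 0)
  (cconj (.ex 0 (.next (cconj (.atom 4 0) (.atom 0 0))))
    (.ex 0 (.next (cconj (.atom 4 0) (.neg (.atom 0 0)))))))))

lemma FULL_fv : FULL.freeVars = ∅ := by
  simp [FULL, CTL.freeVars]

lemma FULL_sat (S : TS ℕ) (As : ℕ → ℕ → S.V) (r : ℕ) (hr : As r 0 = S.vI) :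
    FULL.sat S As r ↔ ∀ ρ : ℕ → S.V, S.IsPath ρ → ρ 0 = S.vI → 4 ∈ S.lab (ρ 0) ∧
      ∀ j, 4 ∈ S.lab (ρ j) →
        (∃ ρ', S.IsPath ρ' ∧ ρ' 0 = ρ j ∧ 4 ∈ S.lab (ρ' 1) ∧ 0 ∈ S.lab (ρ' 1)) ∧
        (∃ ρ', S.IsPath ρ' ∧ ρ' 0 = ρ j ∧ 4 ∈ S.lab (ρ' 1) ∧ 0 ∉ S.lab (ρ' 1)) := by
  simp [FULL, CTL.sat, hr]

lemma concat_path (S : TS ℕ) (ρ ρ' : ℕ → S.V) (n : ℕ) (h : S.IsPath ρ) (h' : S.IsPath ρ')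
    (he : ρ' 0 = ρ n) : ∃ τ, S.IsPath τ ∧ τ 0 = ρ 0 ∧ τ (n + 1) = ρ' 1 := by
  refine ⟨fun i => if i ≤ n then ρ i else ρ' (i - n), ?_, by simp, by simp⟩
  intro i
  rcases lt_trichotomy i n with h1 | h1 | h1
  · have h2 : i ≤ n := by omega
    have h3 : i + 1 ≤ n := by omega
    simp only [h2, h3, if_true]; exact h i
  · subst h1
    simp only [le_refl, if_true, Nat.not_succ_le_self, if_false, Nat.add_sub_cancel_left]
    rw [← he]; exact h' 0
  · have h2 : ¬ i ≤ n := by omega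
    have h3 : ¬ i + 1 ≤ n := by omega
    simp only [h2, h3, if_false]
    rw [show i + 1 - n = (i - n) + 1 by omega]
    exact h' _

lemma full_of_FULL (S : TS ℕ) (As : ℕ → ℕ → S.V) (r : ℕ) (hr : As r 0 = S.vI)
    (h : FULL.sat S As r) :
    ∀ X : Set ℕ, ∃ ρ : ℕ → S.V, S.IsPath ρ ∧ ρ 0 = S.vI ∧ pset S ρ = X := by
  classical
  rw [FULL_sat S As r hr] at h
  intro X
  let T := {v : S.V // 4 ∈ S.lab v ∧ ∃ (ρ : ℕ → S.V) (n : ℕ), S.IsPath ρ ∧ ρ 0 = S.vI ∧ ρ n = v}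
  have step : ∀ (v : T) (P : Prop), ∃ w : T, S.E v.1 w.1 ∧ (0 ∈ S.lab w.1 ↔ P) := by
    rintro ⟨v, hv, ρ, n, h1, h2, rfl⟩ P
    obtain ⟨⟨ρa, a1, a2, a3, a4⟩, ⟨ρb, b1, b2, b3, b4⟩⟩ := (h ρ h1 h2).2 n hv
    by_cases hP : P
    · obtain ⟨τ, t1, t2, t3⟩ := concat_path S ρ ρa n h1 a1 a2
      refine ⟨⟨ρa 1, a3, τ, n + 1, t1, by rw [t2, h2], t3⟩, ?_, by simp [hP, a4]⟩
      have := a1 0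
      rw [a2] at this
      exact this
    · obtain ⟨τ, t1, t2, t3⟩ := concat_path S ρ ρb n h1 b1 b2
      refine ⟨⟨ρb 1, b3, τ, n + 1, t1, by rw [t2, h2], t3⟩, ?_, by simp [hP, b4]⟩
      have := b1 0
      rw [b2] at this
      exact this
  choose f hf1 hf2 using step
  obtain ⟨ρ0, p1, p2⟩ := exists_path S S.vI
  have h0 := (h ρ0 p1 p2).1
  rw [p2] at h0
  let s : ℕ → T := fun n => Nat.rec ⟨S.vI, h0, ρ0, 0, p1, p2, p2⟩ (fun k v => f v (k ∈ X)) n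
  refine ⟨fun n => (s n).1, fun i => hf1 _ _, rfl, ?_⟩
  ext n
  exact hf2 (s n) (n ∈ X)

/-! ### The model built from a relation -/

inductive MV : Type where
  | root : MV
  | bit : Bool → MV
  | chain : ℕ → Set ℕ → Set ℕ → Set ℕ → ℕ → MV

def ME (R : Rel) : MV → MV → Prop
  | .root, .bit _ => True
  | .root, .chain j X Y Z i => R j X Y Z ∧ i = 0
  | .bit _, .bit _ => True
  | .chain j X Y Z i, w => w = .chain j X Y Z (i + 1)
  | _, _ => False

def ML : MV → Set ℕ
  | .root => {4}
  | .bit b => {a | a = 4 ∨ (a = 0 ∧ b = true)}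
  | .chain j X Y Z i => {a | (a = 1 ∧ i ∈ X) ∨ (a = 2 ∧ i ∈ Y) ∨ (a = 3 ∧ i ∈ Z) ∨ a = 5 + j}

def Sm (R : Rel) : TS ℕ where
  V := MV
  E := ME R
  vI := .root
  lab := ML
  succ := by
    intro v
    cases v with
    | root => exact ⟨.bit true, trivial⟩
    | bit b => exact ⟨.bit true, trivial⟩
    | chain j X Y Z i => exact ⟨_, rfl⟩

lemma bit_path (R : Rel) (v : MV) (hv : v = .root ∨ ∃ b, v = .bit b) (b : Bool) :
    (Sm R).IsPath (fun n => (if n = 0 then v else .bit b : MV)) := by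
  intro i
  rcases i with _ | i
  · rcases hv with rfl | ⟨c, rfl⟩ <;> exact trivial
  · exact trivial

lemma Sm_FULL (R : Rel) (As : ℕ → ℕ → MV) (r : ℕ) (hr : As r 0 = .root) :
    FULL.sat (Sm R) As r := by
  refine (FULL_sat (Sm R) As r hr).2 ?_
  intro ρ h1 h2
  refine ⟨by rw [h2]; exact rfl, fun j hj => ?_⟩
  have hv : ρ j = MV.root ∨ ∃ b, ρ j = MV.bit b := by
    rcases hρ : ρ j with _ | b | ⟨k, X, Y, Z, i⟩
    · exact Or.inl rfl
    · exact Or.inr ⟨_, rfl⟩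
    · rw [hρ] at hj
      simp [Sm, ML] at hj
      omega
  refine ⟨⟨_, bit_path R _ hv true, rfl, ?_, ?_⟩, ⟨_, bit_path R _ hv false, rfl, ?_, ?_⟩⟩ <;>
    simp [Sm, ML]

lemma Sm_chain (R : Rel) (ρ : ℕ → MV) (h : (Sm R).IsPath ρ) (j X Y Z)
    (h1 : ρ 1 = .chain j X Y Z 0) : ∀ n, ρ (n + 1) = .chain j X Y Z n := by
  intro n
  induction n with
  | zero => exact h1
  | succ n ih =>
    have := h (n + 1)
    rw [ih] at this
    exact this

lemma Sm_RS (R : Rel) : RS (Sm R) = R := by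
  funext j X Y Z
  simp only [RS, eq_iff_iff]
  constructor
  · rintro ⟨ρ, h1, h2, h3, h4⟩
    have h5 := h1 0
    rw [h2] at h5
    rcases hρ : ρ 1 with _ | b | ⟨k, X', Y', Z', i⟩
    · rw [zero_add, hρ] at h5
      exact h5.elim
    · rw [hρ] at h3
      simp [Sm, ML] at h3
      omega
    · rw [zero_add, hρ] at h5
      obtain ⟨h6, rfl⟩ := h5
      rw [hρ] at h3
      have h7 : 5 + j = 5 + k := by
        simp [Sm, ML] at h3
        omega
      obtain rfl : j = k := by omega
      have h8 := Sm_chain R ρ h1 _ _ _ _ hρ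
      simp only [h8] at h4
      simp [Sm, ML] at h4
      obtain rfl : X' = X := by ext n; have := (h4 n).1; (have h : 1 ≠ 5 + j := by omega); tauto
      obtain rfl : Y' = Y := by ext n; have := (h4 n).2.1; (have h : 2 ≠ 5 + j := by omega); tauto
      obtain rfl : Z' = Z := by ext n; have := (h4 n).2.2; (have h : 3 ≠ 5 + j := by omega); tauto
      exact h6
  · intro h
    refine ⟨fun n => (if n = 0 then .root else .chain j X Y Z (n - 1) : MV), ?_, rfl, ?_, ?_⟩
    · intro i
      rcases i with _ | i
      · exact ⟨h, rfl⟩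
      · exact rfl
    · simp [Sm, ML]
    · intro n
      have h1 : 1 ≠ 5 + j := by omega
      have h2 : 2 ≠ 5 + j := by omega
      have h3 : 3 ≠ 5 + j := by omega
      simp [Sm, ML, h1, h2, h3]

end HC
namespace HC

/-! ### Derived connectives of the intermediate logic -/

def lconj (φ ψ : L) : L := .neg (.disj (.neg φ) (.neg ψ))
def limp (φ ψ : L) : L := .disj (.neg φ) ψ
def liff (φ ψ : L) : L := lconj (limp φ ψ) (limp ψ φ)
def lexN (x : ℕ) (φ : L) : L := .ex x (lconj (.sing x) φ)
def lallN (x : ℕ) (φ : L) : L := .neg (lexN x (.neg φ))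

section
variable (R : Rel) (σ : ℕ → Set ℕ)
@[simp] lemma lsat_conj (φ ψ : L) : (lconj φ ψ).sat R σ ↔ φ.sat R σ ∧ ψ.sat R σ := by
  simp [lconj, L.sat]
@[simp] lemma lsat_imp (φ ψ : L) : (limp φ ψ).sat R σ ↔ (φ.sat R σ → ψ.sat R σ) := by
  simp [limp, L.sat, imp_iff_not_or]
@[simp] lemma lsat_iff (φ ψ : L) : (liff φ ψ).sat R σ ↔ (φ.sat R σ ↔ ψ.sat R σ) := by
  simp [liff, iff_def]
@[simp] lemma lsat_exN (x : ℕ) (φ : L) :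
    (lexN x φ).sat R σ ↔ ∃ n : ℕ, φ.sat R (Function.update σ x {n}) := by
  simp only [lexN, L.sat, lsat_conj, Function.update_self]
  constructor
  · rintro ⟨X, ⟨n, rfl⟩, h⟩; exact ⟨n, h⟩
  · rintro ⟨n, h⟩; exact ⟨_, ⟨n, rfl⟩, h⟩
@[simp] lemma lsat_allN (x : ℕ) (φ : L) :
    (lallN x φ).sat R σ ↔ ∀ n : ℕ, φ.sat R (Function.update σ x {n}) := by
  simp [lallN, L.sat]
end

/-- All free variables are below `d`. -/
def B (d : ℕ) (φ : L) : Prop := ∀ i ∈ φ.fv, i < d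

@[simp] lemma B_rel (d j x y z : ℕ) : B d (.rel j x y z) ↔ x < d ∧ y < d ∧ z < d := by
  simp [B, L.fv]
@[simp] lemma B_sub (d x y : ℕ) : B d (.sub x y) ↔ x < d ∧ y < d := by simp [B, L.fv]
@[simp] lemma B_suc (d x y : ℕ) : B d (.suc x y) ↔ x < d ∧ y < d := by simp [B, L.fv]
@[simp] lemma B_lt (d x y : ℕ) : B d (.lt x y) ↔ x < d ∧ y < d := by simp [B, L.fv]
@[simp] lemma B_zero (d x : ℕ) : B d (.zero x) ↔ x < d := by simp [B, L.fv]
@[simp] lemma B_sing (d x : ℕ) : B d (.sing x) ↔ x < d := by simp [B, L.fv]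
@[simp] lemma B_neg (d : ℕ) (φ : L) : B d (.neg φ) ↔ B d φ := Iff.rfl
@[simp] lemma B_disj (d : ℕ) (φ ψ : L) : B d (.disj φ ψ) ↔ B d φ ∧ B d ψ := by
  simp only [B, L.fv, Set.mem_union]
  exact ⟨fun h => ⟨fun i hi => h i (Or.inl hi), fun i hi => h i (Or.inr hi)⟩,
    fun h i hi => hi.elim (h.1 i) (h.2 i)⟩
@[simp] lemma B_ex (d : ℕ) (φ : L) : B d (.ex d φ) ↔ B (d + 1) φ := by
  simp only [B, L.fv, Set.mem_sdiff, Set.mem_singleton_iff]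
  constructor
  · intro h i hi
    by_cases h1 : i = d
    · omega
    · have := h i ⟨hi, h1⟩; omega
  · rintro h i ⟨h1, h2⟩
    have := h i h1; omega
@[simp] lemma B_conj (d : ℕ) (φ ψ : L) : B d (lconj φ ψ) ↔ B d φ ∧ B d ψ := by simp [lconj]
@[simp] lemma B_imp (d : ℕ) (φ ψ : L) : B d (limp φ ψ) ↔ B d φ ∧ B d ψ := by simp [limp]
@[simp] lemma B_iff (d : ℕ) (φ ψ : L) : B d (liff φ ψ) ↔ B d φ ∧ B d ψ := by
  simp [liff]; tauto
@[simp] lemma B_exN (d : ℕ) (φ : L) : B d (lexN d φ) ↔ B (d + 1) φ := by simp [lexN]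
@[simp] lemma B_allN (d : ℕ) (φ : L) : B d (lallN d φ) ↔ B (d + 1) φ := by simp [lallN]

/-! ### Arithmetic inside the intermediate logic -/

def Good (R : Rel) : Prop :=
  (∀ n m k : ℕ, R 0 {n} {m} {k} ↔ n + m = k) ∧ (∀ n m k : ℕ, R 1 {n} {m} {k} ↔ n * m = k)

def pr (x y z d : ℕ) : L :=
  lexN d (lconj (.rel 0 x y d) (lexN (d + 1) (lconj (.rel 1 d d (d + 1)) (.rel 0 (d + 1) x z))))

lemma pr_B {x y z d : ℕ} (hx : x < d) (hy : y < d) (hz : z < d) : B d (pr x y z d) := by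
  simp [pr]; omega

lemma pr_sat {R : Rel} (hR : Good R) {σ : ℕ → Set ℕ} {x y z d n m k : ℕ} (hx : x < d)
    (hy : y < d) (hz : z < d) (sx : σ x = {n}) (sy : σ y = {m}) (sz : σ z = {k}) :
    (pr x y z d).sat R σ ↔ q n m = k := by
  have x1 : x ≠ d := by omega
  have x2 : x ≠ d + 1 := by omega
  have y1 : y ≠ d := by omega
  have z1 : z ≠ d := by omega
  have z2 : z ≠ d + 1 := by omega
  simp [pr, L.sat, Function.update_apply, x1, x2, y1, z1, z2, sx, sy, sz, hR.1, hR.2, q]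

def memP (x y A d : ℕ) : L := lexN d (lconj (pr x y d (d + 1)) (.sub d A))

lemma memP_B {x y A d : ℕ} (hx : x < d) (hy : y < d) (hA : A < d) : B d (memP x y A d) := by
  simp only [memP, B_exN, B_conj, B_sub]
  exact ⟨pr_B (by omega) (by omega) (by omega), by omega⟩

lemma memP_sat {R : Rel} (hR : Good R) {σ : ℕ → Set ℕ} {x y A d n m : ℕ} (hx : x < d)
    (hy : y < d) (hA : A < d) (sx : σ x = {n}) (sy : σ y = {m}) :
    (memP x y A d).sat R σ ↔ q n m ∈ σ A := by
  have x1 : x ≠ d := by omega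
  have y1 : y ≠ d := by omega
  have A1 : A ≠ d := by omega
  simp only [memP, lsat_exN, lsat_conj]
  have : ∀ k : ℕ, (pr x y d (d + 1)).sat R (Function.update σ d {k}) ↔ q n m = k := fun k =>
    pr_sat hR (by omega) (by omega) (by omega) (by simp [x1, sx]) (by simp [y1, sy]) (by simp)
  simp [this, L.sat, A1]

def gr (f : ℕ → ℕ) : Set ℕ := {k | ∃ n, q n (f n) = k}

@[simp] lemma mem_gr (f : ℕ → ℕ) (n m : ℕ) : q n m ∈ gr f ↔ m = f n := by
  simp only [gr, Set.mem_ofPred_eq, q_iff]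
  constructor
  · rintro ⟨a, rfl, rfl⟩; rfl
  · rintro rfl; exact ⟨n, rfl, rfl⟩

lemma gr_inj {f g : ℕ → ℕ} (h : gr f = gr g) : f = g := by
  funext n
  have : q n (f n) ∈ gr g := by rw [← h]; simp
  simpa using this

def isFun (A d : ℕ) : L :=
  lconj (lallN d (limp (.sub d A) (lexN (d + 1) (lexN (d + 2) (pr (d + 1) (d + 2) d (d + 3))))))
    (lallN d (lexN (d + 1) (lallN (d + 2)
      (liff (memP d (d + 2) A (d + 3)) (.sub (d + 2) (d + 1))))))

lemma isFun_B {A d : ℕ} (hA : A < d) : B d (isFun A d) := by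
  simp only [isFun, B_exN, B_conj, B_sub, B_allN, B_imp, B_iff]
  exact ⟨⟨by omega, pr_B (by omega) (by omega) (by omega)⟩,
    memP_B (by omega) (by omega) (by omega), by omega⟩

lemma isFun_sat {R : Rel} (hR : Good R) {σ : ℕ → Set ℕ} {A d : ℕ} (hA : A < d) :
    (isFun A d).sat R σ ↔ ∃ f, σ A = gr f := by
  have A1 : A ≠ d := by omega
  have A2 : A ≠ d + 1 := by omega
  have A3 : A ≠ d + 2 := by omega
  simp only [isFun, lsat_exN, lsat_conj, lsat_allN, lsat_imp, lsat_iff]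
  have e1 : ∀ k a b : ℕ, (pr (d + 1) (d + 2) d (d + 3)).sat R (Function.update
      (Function.update (Function.update σ d {k}) (d + 1) {a}) (d + 2) {b}) ↔ q a b = k :=
    fun k a b => pr_sat hR (by omega) (by omega) (by omega) (by simp) (by simp)
      (by simp [Function.update_apply])
  have e2 : ∀ a b c : ℕ, (memP d (d + 2) A (d + 3)).sat R (Function.update
      (Function.update (Function.update σ d {a}) (d + 1) {b}) (d + 2) {c}) ↔ q a c ∈ σ A := by
    intro a b c
    rw [memP_sat hR (n := a) (m := c) (by omega) (by omega) (by omega)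
      (by simp [Function.update_apply]) (by simp)]
    simp [A1, A2, A3]
  simp only [e1, e2]
  simp [L.sat, A1]
  constructor
  · rintro ⟨h1, h2⟩
    choose f hf using h2
    refine ⟨f, ?_⟩
    ext k
    constructor
    · intro hk
      obtain ⟨a, b, rfl⟩ := h1 k hk
      rw [mem_gr]; exact (hf a b).1 hk
    · rintro ⟨n, rfl⟩
      exact (hf n _).2 rfl
  · rintro ⟨f, hf⟩
    rw [hf]
    refine ⟨?_, fun n => ⟨f n, fun m => by simp⟩⟩
    rintro k ⟨n, rfl⟩
    exact ⟨_, _, rfl⟩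

/-! ### Translating terms and formulas -/

noncomputable def GR (R : Rel) (F : ℕ) (f : ℕ → ℕ) : ℕ :=
  sInf {m | R (2 + F) (gr f) {m} {m}}

def trT (e e' : ℕ → ℕ) : T2Term → ℕ → ℕ → L
  | .var y, z, _ => .sub z (e y)
  | .zero, z, _ => .zero z
  | .one, z, d => lexN d (lconj (.zero d) (.suc d z))
  | .add s t, z, d => lexN d (lconj (trT e e' s d (d + 1))
      (lexN (d + 1) (lconj (trT e e' t (d + 1) (d + 2)) (.rel 0 d (d + 1) z))))
  | .mul s t, z, d => lexN d (lconj (trT e e' s d (d + 1))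
      (lexN (d + 1) (lconj (trT e e' t (d + 1) (d + 2)) (.rel 1 d (d + 1) z))))
  | .app1 f t, z, d => lexN d (lconj (trT e e' t d (d + 1)) (memP d z (e' f) (d + 1)))
  | .app2 F f, z, d => .disj
      (lconj (.rel (2 + F) (e' f) z z)
        (lallN d (limp (.rel (2 + F) (e' f) d d) (.neg (.lt d z)))))
      (lconj (.zero z) (lallN d (.neg (.rel (2 + F) (e' f) d d))))

structure Inv (e e' v : ℕ → ℕ) (g : ℕ → ℕ → ℕ) (σ : ℕ → Set ℕ) (d : ℕ) : Prop where
  he : ∀ y, e y < d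
  hv : ∀ y, σ (e y) = {v y}
  he' : ∀ f, e' f < d
  hg : ∀ f, σ (e' f) = gr (g f)

lemma Inv.up {e e' v : ℕ → ℕ} {g : ℕ → ℕ → ℕ} {σ : ℕ → Set ℕ} {d : ℕ}
    (h : Inv e e' v g σ d) (X : Set ℕ) : Inv e e' v g (Function.update σ d X) (d + 1) where
  he y := by have := h.he y; omega
  hv y := by rw [Function.update_of_ne (h.he y).ne]; exact h.hv y
  he' y := by have := h.he' y; omega
  hg y := by rw [Function.update_of_ne (h.he' y).ne]; exact h.hg y

lemma Inv.upN {e e' v : ℕ → ℕ} {g : ℕ → ℕ → ℕ} {σ : ℕ → Set ℕ} {d : ℕ}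
    (h : Inv e e' v g σ d) (y n : ℕ) :
    Inv (Function.update e y d) e' (Function.update v y n) g (Function.update σ d {n})
      (d + 1) where
  he x := by
    by_cases hx : x = y
    · subst hx; simp
    · rw [Function.update_of_ne hx]; exact (h.up {n}).he x
  hv x := by
    by_cases hx : x = y
    · subst hx; simp
    · rw [Function.update_of_ne hx, Function.update_of_ne hx]; exact (h.up {n}).hv x
  he' := (h.up {n}).he'
  hg := (h.up {n}).hg

lemma Inv.upF {e e' v : ℕ → ℕ} {g : ℕ → ℕ → ℕ} {σ : ℕ → Set ℕ} {d : ℕ}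
    (h : Inv e e' v g σ d) (y : ℕ) (k : ℕ → ℕ) :
    Inv e (Function.update e' y d) v (Function.update g y k) (Function.update σ d (gr k))
      (d + 1) where
  he := (h.up (gr k)).he
  hv := (h.up (gr k)).hv
  he' x := by
    by_cases hx : x = y
    · subst hx; simp
    · rw [Function.update_of_ne hx]; exact (h.up (gr k)).he' x
  hg x := by
    by_cases hx : x = y
    · subst hx; simp
    · rw [Function.update_of_ne hx, Function.update_of_ne hx]; exact (h.up (gr k)).hg x

lemma sInf_iff (A : Set ℕ) (k : ℕ) :
    ((k ∈ A ∧ ∀ n, n ∈ A → ¬ n < k) ∨ (k = 0 ∧ ∀ n, n ∉ A)) ↔ sInf A = k := by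
  constructor
  · rintro (⟨h1, h2⟩ | ⟨rfl, h⟩)
    · have h3 := Nat.sInf_le h1
      have h4 := h2 _ (Nat.sInf_mem ⟨k, h1⟩)
      omega
    · rw [Set.eq_empty_of_forall_notMem h, Nat.sInf_empty]
  · rintro rfl
    rcases A.eq_empty_or_nonempty with rfl | h
    · right; simp
    · left
      exact ⟨Nat.sInf_mem h, fun n hn => not_lt.2 (Nat.sInf_le hn)⟩

lemma trT_B (e e' : ℕ → ℕ) : ∀ (t : T2Term) (z d : ℕ), z < d → (∀ y, e y < d) →
    (∀ y, e' y < d) → B d (trT e e' t z d) := by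
  have U : ∀ (e : ℕ → ℕ) (d : ℕ), (∀ y, e y < d) → ∀ y, e y < d + 1 := fun e d h y => by
    have := h y; omega
  intro t
  induction t with
  | var y => intro z d hz h1 h2; simp [trT, hz, h1]
  | zero => intro z d hz h1 h2; simp [trT, hz]
  | one => intro z d hz h1 h2; simp [trT]; omega
  | add s t ih1 ih2 =>
    intro z d hz h1 h2
    simp only [trT, B_exN, B_conj, B_rel]
    exact ⟨ih1 _ _ (by omega) (U _ _ h1) (U _ _ h2),
      ih2 _ _ (by omega) (U _ _ (U _ _ h1)) (U _ _ (U _ _ h2)), by omega⟩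
  | mul s t ih1 ih2 =>
    intro z d hz h1 h2
    simp only [trT, B_exN, B_conj, B_rel]
    exact ⟨ih1 _ _ (by omega) (U _ _ h1) (U _ _ h2),
      ih2 _ _ (by omega) (U _ _ (U _ _ h1)) (U _ _ (U _ _ h2)), by omega⟩
  | app1 f t ih =>
    intro z d hz h1 h2
    simp only [trT, B_exN, B_conj]
    exact ⟨ih _ _ (by omega) (U _ _ h1) (U _ _ h2), memP_B (by omega) (by omega) (U _ _ h2 _)⟩
  | app2 F f =>
    intro z d hz h1 h2
    have := h2 f
    simp [trT, hz, h2]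
    omega

lemma trT_sat {R : Rel} (hR : Good R) {e e' v : ℕ → ℕ} {g : ℕ → ℕ → ℕ} :
    ∀ (t : T2Term) (z d k : ℕ) (σ : ℕ → Set ℕ), Inv e e' v g σ d → z < d → σ z = {k} →
      ((trT e e' t z d).sat R σ ↔ t.eval v g (GR R) = k) := by
  intro t
  induction t with
  | var y => intro z d k σ h hz hk; simp [trT, L.sat, hk, h.hv, T2Term.eval, eq_comm]
  | zero => intro z d k σ h hz hk; simp [trT, L.sat, hk, T2Term.eval]
  | one =>
    intro z d k σ h hz hk
    have z1 : z ≠ d := by omega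
    simp [trT, L.sat, hk, T2Term.eval, z1]
  | add s t ih1 ih2 =>
    intro z d k σ h hz hk
    have z1 : z ≠ d := by omega
    have z2 : z ≠ d + 1 := by omega
    have a1 := fun a => ih1 d (d + 1) a _ (h.up {a}) (by omega) (by simp)
    have a2 := fun a b => ih2 (d + 1) (d + 2) b _ ((h.up {a}).up {b}) (by omega) (by simp)
    simp only [trT, lsat_exN, lsat_conj, a1, a2]
    simp [L.sat, hk, T2Term.eval, z1, z2, Function.update_apply, hR.1]
  | mul s t ih1 ih2 =>
    intro z d k σ h hz hk
    have z1 : z ≠ d := by omega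
    have z2 : z ≠ d + 1 := by omega
    have a1 := fun a => ih1 d (d + 1) a _ (h.up {a}) (by omega) (by simp)
    have a2 := fun a b => ih2 (d + 1) (d + 2) b _ ((h.up {a}).up {b}) (by omega) (by simp)
    simp only [trT, lsat_exN, lsat_conj, a1, a2]
    simp [L.sat, hk, T2Term.eval, z1, z2, Function.update_apply, hR.2]
  | app1 f t ih =>
    intro z d k σ h hz hk
    have z1 : z ≠ d := by omega
    have a1 := fun a => ih d (d + 1) a _ (h.up {a}) (by omega) (by simp)
    have a2 : ∀ a : ℕ, (memP d z (e' f) (d + 1)).sat R (Function.update σ d {a}) ↔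
        k = g f a := by
      intro a
      rw [memP_sat hR (n := a) (m := k) (by omega) (by omega) ((h.up {a}).he' f) (by simp)
        (by simp [z1, hk]), (h.up {a}).hg f, mem_gr]
    simp only [trT, lsat_exN, lsat_conj, a1, a2]
    simp [T2Term.eval, eq_comm]
  | app2 F f =>
    intro z d k σ h hz hk
    have z1 : z ≠ d := by omega
    have f1 : e' f ≠ d := (h.he' f).ne
    have key := sInf_iff {m | R (2 + F) (gr (g f)) {m} {m}} k
    simp only [T2Term.eval, GR]
    rw [← key]
    simp [trT, L.sat, hk, h.hg, f1, z1, eq_comm]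
    have l2 : ∀ n : ℕ, (∀ m, ¬ k = n + 1 + m) ↔ k ≤ n := fun n =>
      ⟨fun h => by by_contra h2; exact h (k - n - 1) (by omega), fun h m => by omega⟩
    simp only [l2]

def trF : T2Form → (ℕ → ℕ) → (ℕ → ℕ) → ℕ → L
  | .eq s t, e, e', d => lexN d (lconj (trT e e' s d (d + 1)) (trT e e' t d (d + 1)))
  | .lt s t, e, e', d => lexN d (lconj (trT e e' s d (d + 1))
      (lexN (d + 1) (lconj (trT e e' t (d + 1) (d + 2)) (.lt d (d + 1)))))
  | .neg φ, e, e', d => .neg (trF φ e e' d)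
  | .disj φ ψ, e, e', d => .disj (trF φ e e' d) (trF ψ e e' d)
  | .exN y φ, e, e', d => lexN d (trF φ (Function.update e y d) e' (d + 1))
  | .allN y φ, e, e', d => lallN d (trF φ (Function.update e y d) e' (d + 1))
  | .exF f φ, e, e', d =>
      .ex d (lconj (isFun d (d + 1)) (trF φ e (Function.update e' f d) (d + 1)))
  | .allF f φ, e, e', d =>
      .neg (.ex d (lconj (isFun d (d + 1)) (.neg (trF φ e (Function.update e' f d) (d + 1)))))

lemma trF_B : ∀ (φ : T2Form) (e e' : ℕ → ℕ) (d : ℕ), (∀ y, e y < d) → (∀ y, e' y < d) →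
    B d (trF φ e e' d) := by
  have U : ∀ (e : ℕ → ℕ) (d : ℕ), (∀ y, e y < d) → ∀ y, e y < d + 1 := fun e d h y => by
    have := h y; omega
  have W : ∀ (e : ℕ → ℕ) (d x : ℕ), (∀ y, e y < d) → ∀ y, Function.update e x d y < d + 1 := by
    intro e d x h y
    by_cases hy : y = x
    · subst hy; simp
    · rw [Function.update_of_ne hy]; exact U _ _ h y
  intro φ
  induction φ with
  | eq s t =>
    intro e e' d h1 h2
    simp only [trF, B_exN, B_conj]
    exact ⟨trT_B _ _ _ _ _ (by omega) (U _ _ h1) (U _ _ h2),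
      trT_B _ _ _ _ _ (by omega) (U _ _ h1) (U _ _ h2)⟩
  | lt s t =>
    intro e e' d h1 h2
    simp only [trF, B_exN, B_conj, B_lt]
    exact ⟨trT_B _ _ _ _ _ (by omega) (U _ _ h1) (U _ _ h2),
      trT_B _ _ _ _ _ (by omega) (U _ _ (U _ _ h1)) (U _ _ (U _ _ h2)), by omega⟩
  | neg φ ih => intro e e' d h1 h2; exact ih e e' d h1 h2
  | disj φ ψ ih1 ih2 =>
    intro e e' d h1 h2
    exact (B_disj _ _ _).2 ⟨ih1 e e' d h1 h2, ih2 e e' d h1 h2⟩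
  | exN y φ ih =>
    intro e e' d h1 h2
    exact (B_exN _ _).2 (ih _ _ _ (W _ _ _ h1) (U _ _ h2))
  | allN y φ ih =>
    intro e e' d h1 h2
    exact (B_allN _ _).2 (ih _ _ _ (W _ _ _ h1) (U _ _ h2))
  | exF y φ ih =>
    intro e e' d h1 h2
    simp only [trF, B_ex, B_conj]
    exact ⟨isFun_B (by omega), ih _ _ _ (U _ _ h1) (W _ _ _ h2)⟩
  | allF y φ ih =>
    intro e e' d h1 h2
    simp only [trF, B_ex, B_conj, B_neg]
    exact ⟨isFun_B (by omega), ih _ _ _ (U _ _ h1) (W _ _ _ h2)⟩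

lemma trF_sat {R : Rel} (hR : Good R) : ∀ (φ : T2Form) (e e' v : ℕ → ℕ) (g : ℕ → ℕ → ℕ)
    (d : ℕ) (σ : ℕ → Set ℕ), Inv e e' v g σ d →
      ((trF φ e e' d).sat R σ ↔ φ.sat v g (GR R)) := by
  intro φ
  induction φ with
  | eq s t =>
    intro e e' v g d σ h
    have a1 := fun t a => trT_sat hR t d (d + 1) a _ (h.up {a}) (by omega) (by simp)
    simp only [trF, lsat_exN, lsat_conj, a1, T2Form.sat]
    simp [eq_comm]
  | lt s t =>
    intro e e' v g d σ h
    have a1 := fun t a => trT_sat hR t d (d + 1) a _ (h.up {a}) (by omega) (by simp)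
    have a2 := fun t a b => trT_sat hR t (d + 1) (d + 2) b _ ((h.up {a}).up {b}) (by omega)
      (by simp)
    simp only [trF, lsat_exN, lsat_conj, a1, a2, T2Form.sat]
    have l : ∀ n k : ℕ, (∃ m, n + 1 + m = k) ↔ n < k := fun n k =>
      ⟨fun ⟨m, hm⟩ => by omega, fun h => ⟨k - n - 1, by omega⟩⟩
    simp [L.sat, Function.update_apply, l]
  | neg φ ih => intro e e' v g d σ h; simp only [trF, L.sat, T2Form.sat, ih _ _ _ _ _ _ h]
  | disj φ ψ ih1 ih2 =>
    intro e e' v g d σ h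
    simp only [trF, L.sat, T2Form.sat, ih1 _ _ _ _ _ _ h, ih2 _ _ _ _ _ _ h]
  | exN y φ ih =>
    intro e e' v g d σ h
    simp only [trF, lsat_exN, T2Form.sat]
    exact exists_congr fun n => ih _ _ _ _ _ _ (h.upN y n)
  | allN y φ ih =>
    intro e e' v g d σ h
    simp only [trF, lsat_allN, T2Form.sat]
    exact forall_congr' fun n => ih _ _ _ _ _ _ (h.upN y n)
  | exF y φ ih =>
    intro e e' v g d σ h
    simp only [trF, L.sat, lsat_conj, T2Form.sat, isFun_sat hR (Nat.lt_succ_self d),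
      Function.update_self]
    constructor
    · rintro ⟨X, ⟨k, rfl⟩, hX⟩
      exact ⟨k, (ih _ _ _ _ _ _ (h.upF y k)).1 hX⟩
    · rintro ⟨k, hk⟩
      exact ⟨gr k, ⟨k, rfl⟩, (ih _ _ _ _ _ _ (h.upF y k)).2 hk⟩
  | allF y φ ih =>
    intro e e' v g d σ h
    simp only [trF, L.sat, lsat_conj, T2Form.sat, isFun_sat hR (Nat.lt_succ_self d),
      Function.update_self]
    constructor
    · intro hh k
      by_contra hk
      exact hh ⟨gr k, ⟨k, rfl⟩, fun hs => hk ((ih _ _ _ _ _ _ (h.upF y k)).1 hs)⟩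
    · rintro hh ⟨X, ⟨k, rfl⟩, hX⟩
      exact hX ((ih _ _ _ _ _ _ (h.upF y k)).2 (hh k))

/-! ### The axioms -/

def AX : L :=
  lallN 2 (lallN 3 (lallN 4 (lconj
    (liff (.rel 0 2 3 4) (.disj (lconj (.zero 3) (.sub 4 2))
      (lexN 5 (lexN 6 (lconj (.suc 5 3) (lconj (.suc 6 4) (.rel 0 2 5 6)))))))
    (liff (.rel 1 2 3 4) (.disj (lconj (.zero 3) (.zero 4))
      (lexN 5 (lexN 6 (lconj (.suc 5 3) (lconj (.rel 1 2 5 6) (.rel 0 6 2 4))))))))))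

lemma AX_B : B 2 AX := by simp [AX]

lemma AX_sat (R : Rel) (σ : ℕ → Set ℕ) : AX.sat R σ ↔ Good R := by
  have h : AX.sat R σ ↔ ∀ n m k : ℕ,
      (R 0 {n} {m} {k} ↔ (m = 0 ∧ k = n) ∨ ∃ a b : ℕ, a + 1 = m ∧ b + 1 = k ∧ R 0 {n} {a} {b}) ∧
      (R 1 {n} {m} {k} ↔ (m = 0 ∧ k = 0) ∨
        ∃ a b : ℕ, a + 1 = m ∧ R 1 {n} {a} {b} ∧ R 0 {b} {n} {k}) := by
    simp [AX, L.sat, Function.update_apply, eq_comm]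
  rw [h]
  constructor
  · intro h
    have h0 : ∀ m n k : ℕ, R 0 {n} {m} {k} ↔ n + m = k := by
      intro m
      induction m with
      | zero => intro n k; rw [(h n 0 k).1]; simp [eq_comm]
      | succ m ih =>
        intro n k
        rw [(h n (m + 1) k).1]
        constructor
        · rintro (⟨h1, _⟩ | ⟨a, b, h1, h2, h3⟩)
          · omega
          · obtain rfl : a = m := by omega
            rw [ih] at h3; omega
        · intro hk
          exact Or.inr ⟨m, n + m, rfl, by omega, (ih _ _).2 rfl⟩
    refine ⟨fun n m k => h0 m n k, ?_⟩
    intro n m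
    induction m with
    | zero => intro k; rw [(h n 0 k).2]; simp [eq_comm]
    | succ m ih =>
      intro k
      rw [(h n (m + 1) k).2, Nat.mul_succ]
      constructor
      · rintro (⟨h1, _⟩ | ⟨a, b, h1, h2, h3⟩)
        · omega
        · obtain rfl : a = m := by omega
          rw [ih] at h2; rw [h0] at h3; omega
      · intro hk
        exact Or.inr ⟨m, n * m, rfl, (ih _).2 rfl, (h0 _ _ _).2 hk⟩
  · rintro ⟨h0, h1⟩ n m k
    simp only [h0, h1]
    constructor
    · rcases m with _ | m
      · simp [eq_comm]
      · constructor
        · intro hk; exact Or.inr ⟨m, n + m, rfl, by omega, rfl⟩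
        · rintro (⟨h1, _⟩ | ⟨a, b, h1, h2, h3⟩) <;> omega
    · rcases m with _ | m
      · simp [eq_comm]
      · rw [Nat.mul_succ]
        constructor
        · intro hk; exact Or.inr ⟨m, n * m, rfl, rfl, hk⟩
        · rintro (⟨h1, _⟩ | ⟨a, b, h1, h2, h3⟩)
          · omega
          · obtain rfl : a = m := by omega
            omega

def zeroFun : L := lconj (isFun 1 2) (lallN 2 (lexN 3 (lconj (.zero 3) (memP 2 3 1 4))))

lemma zeroFun_B : B 2 zeroFun := by
  simp only [zeroFun, B_conj, B_exN, B_allN]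
  exact ⟨isFun_B (by omega), by simp, memP_B (by omega) (by omega) (by omega)⟩

lemma zeroFun_sat {R : Rel} (hR : Good R) (σ : ℕ → Set ℕ) :
    zeroFun.sat R σ ↔ σ 1 = gr (fun _ => 0) := by
  have a : ∀ n m : ℕ, (memP 2 3 1 4).sat R (Function.update (Function.update σ 2 {n}) 3 {m}) ↔
      q n m ∈ σ 1 := by
    intro n m
    rw [memP_sat hR (n := n) (m := m) (by omega) (by omega) (by omega)
      (by simp [Function.update_apply]) (by simp)]
    simp [Function.update_apply]
  simp only [zeroFun, lsat_conj, lsat_allN, lsat_exN, isFun_sat hR (by omega : 1 < 2), a]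
  simp [L.sat]
  constructor
  · rintro ⟨⟨f, hf⟩, h⟩
    rw [hf] at h ⊢
    congr 1
    funext n
    have := h n
    simpa [eq_comm] using this
  · intro h
    rw [h]
    exact ⟨⟨_, rfl⟩, fun n => by simp⟩

def KK (ψ : T2Form) : L :=
  lconj (.sing 0) (.ex 1 (lconj AX (lconj zeroFun (trF ψ (fun _ => 0) (fun _ => 1) 2))))

lemma KK_B (ψ : T2Form) : B 1 (KK ψ) := by
  simp only [KK, B_conj, B_ex, B_sing]
  exact ⟨by omega, AX_B, zeroFun_B, trF_B _ _ _ _ (by simp) (by simp)⟩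

lemma KK_sat (ψ : T2Form) (R : Rel) (σ : ℕ → Set ℕ) (x : ℕ) (hx : x ∈ σ 0) :
    (KK ψ).sat R σ ↔ σ 0 = {x} ∧ Good R ∧ ψ.sat (fun _ => x) (fun _ _ => 0) (GR R) := by
  have inv : ∀ X, σ 0 = {x} → X = gr (fun _ => 0) →
      Inv (fun _ => 0) (fun _ => 1) (fun _ => x) (fun _ _ => 0) (Function.update σ 1 X) 2 := by
    intro X h1 h2
    exact ⟨by simp, by simp [h1], by simp, by simp [h2]⟩
  simp only [KK, lsat_conj, L.sat, AX_sat]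
  constructor
  · rintro ⟨⟨n, hn⟩, X, hR, h1, h2⟩
    rw [zeroFun_sat hR, Function.update_self] at h1
    have : σ 0 = {x} := by
      rw [hn] at hx ⊢
      rw [Set.mem_singleton_iff.1 hx]
    exact ⟨this, hR, (trF_sat hR _ _ _ _ _ _ _ (inv X this h1)).1 h2⟩
  · rintro ⟨h1, hR, h2⟩
    refine ⟨⟨x, h1⟩, gr (fun _ => 0), hR, ?_, (trF_sat hR _ _ _ _ _ _ _ (inv _ h1 rfl)).2 h2⟩
    rw [zeroFun_sat hR, Function.update_self]

/-! ### The reduction -/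

def nextN (φ : CTL ℕ) : ℕ → CTL ℕ
  | 0 => φ
  | n + 1 => .next (nextN φ n)

lemma nextN_fv (φ : CTL ℕ) (n : ℕ) : (nextN φ n).freeVars = φ.freeVars := by
  induction n with
  | zero => rfl
  | succ n ih => exact ih

lemma nextN_sat (S : TS ℕ) (φ : CTL ℕ) (n : ℕ) (As : ℕ → ℕ → S.V) (r : ℕ) :
    (nextN φ n).sat S As r ↔ φ.sat S (fun x i => As x (i + n)) r := by
  induction n generalizing As with
  | zero => rfl
  | succ n ih =>
    simp only [nextN, CTL.sat, ih]
    have : (fun x i => As x (i + n + 1)) = (fun x i => As x (i + (n + 1))) := by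
      funext x i; rw [add_assoc]
    rw [this]

def redS (ψ : T2Form) (x : ℕ) : CTL ℕ :=
  .ex 0 (cconj (nextN (.atom 0 0) (x + 1)) (cconj FULL (tr (KK ψ))))

lemma redS_sentence (ψ : T2Form) (x : ℕ) : (redS ψ x).IsSentence := by
  refine ⟨?_, trivial⟩
  rw [Set.eq_empty_iff_forall_notMem]
  intro i hi
  simp only [redS, CTL.freeVars, fv_cconj, nextN_fv, FULL_fv, Set.empty_union] at hi
  obtain ⟨h1 | h1, h2⟩ := hi
  · exact h2 h1
  · have := KK_B ψ i (tr_fv _ h1)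
    exact h2 (by simp; omega)

/-- The relation coding addition, multiplication and type-2 objects. -/
def RG (G : ℕ → (ℕ → ℕ) → ℕ) : Rel := fun j X Y Z =>
  (j = 0 ∧ ∃ n m : ℕ, X = {n} ∧ Y = {m} ∧ Z = {n + m}) ∨
  (j = 1 ∧ ∃ n m : ℕ, X = {n} ∧ Y = {m} ∧ Z = {n * m}) ∨
  ∃ F f, j = 2 + F ∧ X = gr f ∧ Y = {G F f}

lemma RG_good (G : ℕ → (ℕ → ℕ) → ℕ) : Good (RG G) := by
  constructor
  · intro n m k
    constructor
    · rintro (⟨_, a, b, h1, h2, h3⟩ | ⟨h, _⟩ | ⟨F, f, h, _⟩)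
      · rw [Set.singleton_eq_singleton_iff] at h1 h2 h3
        omega
      · omega
      · omega
    · rintro rfl
      exact Or.inl ⟨rfl, n, m, rfl, rfl, rfl⟩
  · intro n m k
    constructor
    · rintro (⟨h, _⟩ | ⟨_, a, b, h1, h2, h3⟩ | ⟨F, f, h, _⟩)
      · omega
      · rw [Set.singleton_eq_singleton_iff] at h1 h2 h3
        rw [h1, h2, h3]
      · omega
    · rintro rfl
      exact Or.inr (Or.inl ⟨rfl, n, m, rfl, rfl, rfl⟩)

lemma GR_RG (G : ℕ → (ℕ → ℕ) → ℕ) : GR (RG G) = G := by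
  funext F f
  have : {m | RG G (2 + F) (gr f) {m} {m}} = {G F f} := by
    ext m
    simp only [Set.mem_ofPred_eq, Set.mem_singleton_iff]
    constructor
    · rintro (⟨h, _⟩ | ⟨h, _⟩ | ⟨F', f', h1, h2, h3⟩)
      · omega
      · omega
      · obtain rfl : F = F' := by omega
        rw [← gr_inj h2] at h3
        exact Set.singleton_eq_singleton_iff.1 h3
    · rintro rfl
      exact Or.inr (Or.inr ⟨F, f, rfl, rfl, rfl⟩)
  rw [GR, this, csInf_singleton]

lemma redS_models (ψ : T2Form) (x : ℕ) :
    (∃ S : TS ℕ, CModels S (redS ψ x)) ↔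
      ∃ G : ℕ → (ℕ → ℕ) → ℕ, ψ.sat (fun _ => x) (fun _ _ => 0) G := by
  constructor
  · rintro ⟨S, h⟩
    obtain ⟨ρ0, p1, p2⟩ := exists_path S S.vI
    obtain ⟨ρ, r1, r2, h⟩ := h ρ0 p1 p2
    have r3 : ρ 0 = S.vI := r2.trans p2
    simp only [sat_cconj, nextN_sat] at h
    obtain ⟨h1, h2, h3⟩ := h
    have hr : (Function.update (fun _ => ρ0) 0 ρ : ℕ → ℕ → S.V) 0 0 = S.vI := by simp [r3]
    have full := full_of_FULL S _ 0 hr h2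
    rw [tr_sat S full _ _ _ hr, KK_sat _ _ _ x] at h3
    · exact ⟨_, h3.2.2⟩
    · simpa [CTL.sat, pset] using h1
  · rintro ⟨G, hG⟩
    refine ⟨Sm (RG G), ?_⟩
    intro ρ0 p1 p2
    have full := full_of_FULL (Sm (RG G)) (fun _ => ρ0) 0 p2 (Sm_FULL _ _ _ p2)
    obtain ⟨ρ, r1, r2, r3⟩ := full {x}
    refine ⟨ρ, r1, r2.trans p2.symm, ?_⟩
    simp only [sat_cconj, nextN_sat]
    have hr : (Function.update (fun _ => ρ0) 0 ρ : ℕ → ℕ → (Sm (RG G)).V) 0 0 =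
      (Sm (RG G)).vI := by simp [r2]
    have hx : x ∈ pset (Sm (RG G)) ρ := by rw [r3]; rfl
    refine ⟨?_, Sm_FULL _ _ _ hr, ?_⟩
    · simpa [CTL.sat, pset] using hx
    · rw [tr_sat _ full _ _ _ hr, KK_sat _ _ _ x (by simpa using hx), Sm_RS, GR_RG]
      exact ⟨by simpa using r3, RG_good G, hG⟩

lemma nextN_code (φ : CTL ℕ) (n : ℕ) :
    (nextN φ n).code = Nat.rec φ.code (fun _ c => Nat.pair 3 c) n := by
  induction n with
  | zero => rfl
  | succ n ih => simp only [nextN, CTL.code, ih]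

lemma redS_comp (ψ : T2Form) : Computable (fun x => (redS ψ x).code) := by
  apply Primrec.to_comp
  have h1 : Primrec (fun n : ℕ => (nextN (.atom 0 0) n).code) := by
    refine (Primrec.nat_rec₁ (CTL.code (.atom 0 0)) (f := fun _ c => Nat.pair 3 c) ?_).of_eq ?_
    · exact Primrec₂.natPair.comp (Primrec.const 3) Primrec.snd
    · intro n; rw [nextN_code]
  have h2 := h1.comp Primrec.succ
  have P : ∀ (c : ℕ) {f : ℕ → ℕ}, Primrec f → Primrec (fun n => Nat.pair c (f n)) :=
    fun c f hf => Primrec₂.natPair.comp (Primrec.const c) hf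
  exact P 5 (P 0 (P 1 (P 2 (Primrec₂.natPair.comp (P 1 h2) (Primrec.const _)))))

theorem lower (N : Set ℕ) (hN : Sigma21 N) : ManyOneRed N CTLSatCodes := by
  obtain ⟨ψ, hψ⟩ := hN
  refine ⟨fun x => (redS ψ x).code, redS_comp ψ, fun x => ?_⟩
  rw [hψ, ← redS_models]
  constructor
  · intro h
    exact ⟨_, redS_sentence ψ x, rfl, h⟩
  · rintro ⟨φ, _, h2, h3⟩
    rw [code_inj _ _ h2] at h3
    exact h3

end HC
/-- **HyperCTL* satisfiability is Σ²₁-complete**: the set of codes of satisfiable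
sentences is Σ²₁ and every Σ²₁ set many-one reduces to it via a total computable
function. -/
theorem hyperctl_sat_Sigma21_complete :
    Sigma21 CTLSatCodes ∧ ∀ N : Set ℕ, Sigma21 N → ManyOneRed N CTLSatCodes := by
  exact ⟨HC.upper, fun N hN => HC.lower N hN⟩
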